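/- arXiv:2407.04817 — 5 statements merged into one kernel-verified Lean document; each statement's English description precedes it below -/
import Mathlib

section
/- Let (Q,I) be a gentle bound quiver. Then every vertex of Q is the center of exactly two split permitted threads. -/
set_option autoImplicit false

attribute [local instance] Classical.propDecidable

/-- A bound-quiver datum: a quiver (source and target maps on a set of arrows) together
with a set of length-two relations; `rel a b` means that the length-two path `ab`
(composable, i.e. `src a = tgt b`; paths are written from right to left) lies in the
generating set of relations of the ideal `I`. -/
structure BQuiv (V A : Type) where
  src : A → V
  tgt : A → V
  rel : A → A → Prop

namespace BQuiv

variable {V A : Type}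

/-- `l` is (the list of arrows of) a path of the quiver, written from right to left:
`l = [a₁, a₂, …, a_ℓ]` represents `a₁a₂⋯a_ℓ` and we ask `src aₜ = tgt aₜ₊₁`. -/
def PathChain (Q : BQuiv V A) (l : List A) : Prop :=
  l.Chain' (fun a b => Q.src a = Q.tgt b)

/-- The degree of a vertex: the number of outgoing plus the number of incoming arrows. -/
noncomputable def deg (Q : BQuiv V A) (v : V) : ℕ :=
  Nat.card {a : A // Q.src a = v} + Nat.card {a : A // Q.tgt a = v}

/-- `(Q, I)` is a gentle bound quiver. -/
structure IsGentle (Q : BQuiv V A) : Prop where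
  /-- relations are composable length-two paths -/
  rel_comp : ∀ a b, Q.rel a b → Q.src a = Q.tgt b
  /-- at most two outgoing arrows at every vertex -/
  out_le : ∀ v, Nat.card {a : A // Q.src a = v} ≤ 2
  /-- at most two incoming arrows at every vertex -/
  in_le : ∀ v, Nat.card {a : A // Q.tgt a = v} ≤ 2
  /-- for every arrow `b` there is at most one arrow `a` with `ab ∉ I` -/
  unique_nonrel_post : ∀ b a a', Q.src a = Q.tgt b → Q.src a' = Q.tgt b →
    ¬ Q.rel a b → ¬ Q.rel a' b → a = a'
  /-- for every arrow `b` there is at most one arrow `c` with `bc ∉ I` -/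
  unique_nonrel_pre : ∀ b c c', Q.src b = Q.tgt c → Q.src b = Q.tgt c' →
    ¬ Q.rel b c → ¬ Q.rel b c' → c = c'
  /-- for every arrow `b` there is at most one arrow `a` with `ab ∈ I` -/
  unique_rel_post : ∀ b a a', Q.rel a b → Q.rel a' b → a = a'
  /-- for every arrow `b` there is at most one arrow `c` with `bc ∈ I` -/
  unique_rel_pre : ∀ b c c', Q.rel b c → Q.rel b c' → c = c'
  /-- admissibility: there is `m ≥ 2` such that every path of length `m` contains a
  length-two subpath lying in the relation set -/
  admissible : ∃ m, 2 ≤ m ∧ ∀ l : List A, l.length = m → Q.PathChain l →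
    ¬ l.Chain' (fun a b => ¬ Q.rel a b)
  /-- the quiver is connected -/
  connected : ∀ u v : V, Relation.ReflTransGen
    (fun x y => ∃ a, (Q.src a = x ∧ Q.tgt a = y) ∨ (Q.src a = y ∧ Q.tgt a = x)) u v
  /-- the quiver has at least one arrow -/
  has_arrow : Nonempty A

/-- A path of the quiver `Q`, with a base (source) vertex so that trivial paths make
sense.  The arrows are written from right to left. -/
structure Path (Q : BQuiv V A) where
  base : V
  arrows : List A
  chain : arrows.Chain' (fun a b => Q.src a = Q.tgt b)
  base_eq : ∀ a, arrows.getLast? = some a → Q.src a = base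

variable {Q : BQuiv V A}

/-- The source vertex of a path. -/
def Path.srcV (p : Path Q) : V := p.base

/-- The target vertex of a path. -/
def Path.tgtV (p : Path Q) : V := p.arrows.head?.elim p.base Q.tgt

/-- The vertex of a path sitting between its first `n` arrows and the rest:
the center of the corresponding split of the path. -/
def Path.vertexAt (p : Path Q) (n : ℕ) : V :=
  (p.arrows.drop n).head?.elim p.base Q.tgt

/-- A path is permitted if none of its length-two subpaths is a relation. -/
def Path.Permitted (p : Path Q) : Prop :=
  p.arrows.Chain' (fun a b => ¬ Q.rel a b)

/-- A path is forbidden if each of its length-two subpaths is a relation. -/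
def Path.Forbidden (p : Path Q) : Prop :=
  p.arrows.Chain' (fun a b => Q.rel a b)

/-- Permitted threads: maximal non-trivial permitted paths, together with the trivial
paths `e_i` at vertices `i` with `deg i = 1`, or `deg i = 2` with the two arrows
`α, β` at `i` satisfying `src α = tgt β = i` and `αβ ∉ I`. -/
def IsPermThread (Q : BQuiv V A) (p : Path Q) : Prop :=
  (p.arrows ≠ [] ∧ p.Permitted ∧
    (∀ a b, p.arrows.head? = some b → Q.src a = Q.tgt b → Q.rel a b) ∧
    (∀ a c, p.arrows.getLast? = some a → Q.src a = Q.tgt c → Q.rel a c)) ∨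
  (p.arrows = [] ∧ (Q.deg p.base = 1 ∨ (Q.deg p.base = 2 ∧
    ∃ α β, Q.src α = p.base ∧ Q.tgt β = p.base ∧ ¬ Q.rel α β)))

/-- Forbidden threads: maximal non-trivial forbidden paths, together with the trivial
paths `e_i` at vertices `i` with `deg i = 1`, or `deg i = 2` with the two arrows
`α, β` at `i` satisfying `src α = tgt β = i` and `αβ ∈ I`. -/
def IsForbThread (Q : BQuiv V A) (p : Path Q) : Prop :=
  (p.arrows ≠ [] ∧ p.Forbidden ∧
    (∀ a b, p.arrows.head? = some b → Q.src a = Q.tgt b → ¬ Q.rel a b) ∧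
    (∀ a c, p.arrows.getLast? = some a → Q.src a = Q.tgt c → ¬ Q.rel a c)) ∨
  (p.arrows = [] ∧ (Q.deg p.base = 1 ∨ (Q.deg p.base = 2 ∧
    ∃ α β, Q.src α = p.base ∧ Q.tgt β = p.base ∧ Q.rel α β)))

end BQuiv

/-- Two chains for a functional relation with the same head and terminal ends agree. -/
theorem chain_unique {A : Type} (R : A → A → Prop)
    (hR : ∀ a b c, R a b → R a c → b = c) :
    ∀ (l l' : List A), l.IsChain R → l'.IsChain R → l.head? = l'.head? →
      (∀ a c, l.getLast? = some a → ¬ R a c) → (∀ a c, l'.getLast? = some a → ¬ R a c) →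
      l = l' := by
  intro l
  induction l with
  | nil => intro l' _ _ h _ _; cases l' <;> simp_all
  | cons a t ih =>
    intro l' h1 h2 h h3 h4
    cases l' with
    | nil => simp at h
    | cons a' t' =>
      obtain rfl : a = a' := by simpa using h
      cases t with
      | nil =>
        cases t' with
        | nil => rfl
        | cons b' t' =>
          rw [List.isChain_cons_cons] at h2
          exact absurd h2.1 (h3 a b' (by simp))
      | cons b t =>
        cases t' with
        | nil =>
          rw [List.isChain_cons_cons] at h1
          exact absurd h1.1 (h4 a b (by simp))
        | cons b' t' =>
          rw [List.isChain_cons_cons] at h1 h2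
          rw [ih (b' :: t') h1.2 h2.2 (by simp [hR a b b' h1.1 h2.1])
            (fun x c hx => h3 x c (by simpa using hx))
            (fun x c hx => h4 x c (by simpa using hx))]

/-- If chains have bounded length, every element starts a terminal chain. -/
theorem chain_exists {A : Type} (R : A → A → Prop) (m : ℕ)
    (hm : ∀ l : List A, l.length = m → ¬ l.IsChain R) (x : Option A) :
    ∃ l : List A, l.IsChain R ∧ l.head? = x ∧ (∀ a c, l.getLast? = some a → ¬ R a c) := by
  cases x with
  | none => exact ⟨[], by simp, by simp, by simp⟩
  | some x =>
    by_contra hcon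
    push Not at hcon
    have key : ∀ k : ℕ, ∃ l : List A, l.length = k + 1 ∧ l.IsChain R ∧ l.head? = some x := by
      intro k
      induction k with
      | zero => exact ⟨[x], by simp, by simp, by simp⟩
      | succ k ih =>
        obtain ⟨l, hl, hc, hh⟩ := ih
        obtain ⟨a, c, ha, hac⟩ := hcon l hc hh
        refine ⟨l ++ [c], by simp [hl], ?_, by simp [hh]⟩
        rw [List.isChain_append]
        refine ⟨hc, by simp, ?_⟩
        intro y hy z hz
        simp_all
    obtain ⟨l, hl, hc, -⟩ := key m
    refine hm (l.take m) (by simp [hl]) (hc.take m)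

namespace BQuiv

/-- Permitted composability. -/
def Perm {V A : Type} (Q : BQuiv V A) (a b : A) : Prop := Q.src a = Q.tgt b ∧ ¬ Q.rel a b

/-- Condition for a trivial permitted thread. -/
def Triv {V A : Type} (Q : BQuiv V A) (v : V) : Prop :=
  Q.deg v = 1 ∨ (Q.deg v = 2 ∧ ∃ α β, Q.src α = v ∧ Q.tgt β = v ∧ ¬ Q.rel α β)

/-- Local data of a split thread at `v`. -/
def Loc {V A : Type} (Q : BQuiv V A) (v : V) : Option A → Option A → Prop
  | some a, some b => Q.src a = v ∧ Q.tgt b = v ∧ ¬ Q.rel a b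
  | none, some b => Q.tgt b = v ∧ ∀ a, Q.src a = v → Q.rel a b
  | some a, none => Q.src a = v ∧ ∀ c, Q.tgt c = v → Q.rel a c
  | none, none => Q.Triv v

theorem perm_chain {V A : Type} (Q : BQuiv V A) (l : List A) :
    l.IsChain Q.Perm ↔ l.IsChain (fun a b => Q.src a = Q.tgt b) ∧
      l.IsChain (fun a b => ¬ Q.rel a b) := by
  constructor
  · intro h
    exact ⟨h.imp fun _ _ h => h.1, h.imp fun _ _ h => h.2⟩
  · rintro ⟨h1, h2⟩
    induction l with
    | nil => simp
    | cons a t ih =>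
      rw [List.isChain_cons] at *
      exact ⟨fun y hy => ⟨h1.1 y hy, h2.1 y hy⟩, ih h1.2 h2.2⟩

theorem thread_iff {V A : Type} (Q : BQuiv V A) (p : Path Q) (h : p.arrows ≠ []) :
    IsPermThread Q p ↔ p.arrows.IsChain Q.Perm ∧
      (∀ a c, p.arrows.head? = some a → ¬ Q.Perm c a) ∧
      (∀ a c, p.arrows.getLast? = some a → ¬ Q.Perm a c) := by
  rw [perm_chain]
  have := p.chain
  simp only [IsPermThread, h, Path.Permitted, Perm, not_and, not_not]
  constructor
  · rintro (⟨-, h1, h2, h3⟩ | h)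
    · exact ⟨⟨this, h1⟩, fun a c => h2 c a, h3⟩
    · simp at h
  · rintro ⟨⟨_, h1⟩, h2, h3⟩
    exact Or.inl ⟨by simpa using h, h1, fun a c => h2 c a, h3⟩

theorem card_le_two {A : Type} [Fintype A] (P : A → Prop) (h : Nat.card {a // P a} ≤ 2) :
    (Nat.card {a // P a} = 0 ∧ ∀ a, ¬ P a) ∨
    (Nat.card {a // P a} = 1 ∧ ∃ a, ∀ x, P x ↔ x = a) ∨
    (Nat.card {a // P a} = 2 ∧ ∃ a b, a ≠ b ∧ ∀ x, P x ↔ x = a ∨ x = b) := by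
  have e : Nat.card {a // P a} = ({a | P a} : Set A).ncard := rfl
  rw [e] at h ⊢
  have : ({a | P a} : Set A).ncard = 0 ∨ ({a | P a} : Set A).ncard = 1 ∨
    ({a | P a} : Set A).ncard = 2 := by omega
  rcases this with h | h | h
  · refine Or.inl ⟨h, ?_⟩
    rw [Set.ncard_eq_zero] at h
    intro a ha
    have : a ∈ ({a | P a} : Set A) := ha
    simp [h] at this
  · refine Or.inr (Or.inl ⟨h, ?_⟩)
    rw [Set.ncard_eq_one] at h
    obtain ⟨a, h⟩ := h
    exact ⟨a, fun x => by simpa using Set.ext_iff.1 h x⟩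
  · refine Or.inr (Or.inr ⟨h, ?_⟩)
    rw [Set.ncard_eq_two] at h
    obtain ⟨a, b, hab, h⟩ := h
    exact ⟨a, b, hab, fun x => by simpa using Set.ext_iff.1 h x⟩

theorem exists_arrow {V A : Type} (Q : BQuiv V A) (hQ : Q.IsGentle) (v : V) :
    ∃ a, Q.src a = v ∨ Q.tgt a = v := by
  obtain ⟨a⟩ := hQ.has_arrow
  rcases (hQ.connected v (Q.src a)).cases_head with h | ⟨c, ⟨b, hb⟩, -⟩
  · exact ⟨a, Or.inl h.symm⟩
  · exact ⟨b, by tauto⟩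

theorem loc_eq {V A : Type} (Q : BQuiv V A) (v : V) (p q : Option A × Option A) (hpq : p ≠ q)
    (h : ∀ x y, Q.Loc v x y ↔ (x, y) = p ∨ (x, y) = q) :
    ({z | Q.Loc v z.1 z.2} : Set (Option A × Option A)).ncard = 2 := by
  rw [Set.ncard_eq_two]
  exact ⟨p, q, hpq, by ext ⟨x, y⟩; simp [h]⟩

theorem loc_card {V A : Type} [Fintype A] (Q : BQuiv V A) (hQ : Q.IsGentle) (v : V) :
    ({z | Q.Loc v z.1 z.2} : Set (Option A × Option A)).ncard = 2 := by
  have n1 := hQ.unique_nonrel_post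
  have n2 := hQ.unique_nonrel_pre
  have r1 := hQ.unique_rel_post
  have r2 := hQ.unique_rel_pre
  have hd : Q.deg v = Nat.card {a : A // Q.src a = v} + Nat.card {a : A // Q.tgt a = v} := rfl
  rcases card_le_two _ (hQ.out_le v) with ⟨c1, h1⟩ | ⟨c1, a, h1⟩ | ⟨c1, a, a', ha, h1⟩ <;>
  rcases card_le_two _ (hQ.in_le v) with ⟨c2, h2⟩ | ⟨c2, b, h2⟩ | ⟨c2, b, b', hb, h2⟩ <;>
  rw [c1, c2] at hd <;> clear c1 c2
  · obtain ⟨a, ha⟩ := exists_arrow Q hQ v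
    grind
  · apply loc_eq Q v (none, none) (none, some b) (by simp)
    rintro (_ | x) (_ | y) <;> simp [Loc, Triv, hd, h1, h2]
  · apply loc_eq Q v (none, some b) (none, some b') (by simpa)
    rintro (_ | x) (_ | y) <;> simp [Loc, Triv, hd, h1, h2]
  · apply loc_eq Q v (none, none) (some a, none) (by simp)
    rintro (_ | x) (_ | y) <;> simp [Loc, Triv, hd, h1, h2]
  · by_cases hr : Q.rel a b
    · apply loc_eq Q v (none, some b) (some a, none) (by simp)
      rintro (_ | x) (_ | y) <;> simp [Loc, Triv, hd, h1, h2] <;> grind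
    · apply loc_eq Q v (none, none) (some a, some b) (by simp)
      rintro (_ | x) (_ | y) <;> simp [Loc, Triv, hd, h1, h2] <;> grind
  · by_cases hr : Q.rel a b
    · apply loc_eq Q v (none, some b) (some a, some b') (by simp)
      rintro (_ | x) (_ | y) <;> simp [Loc, Triv, hd, h1, h2] <;> grind
    · apply loc_eq Q v (none, some b') (some a, some b) (by simp)
      rintro (_ | x) (_ | y) <;> simp [Loc, Triv, hd, h1, h2] <;> grind
  · apply loc_eq Q v (some a, none) (some a', none) (by simpa)
    rintro (_ | x) (_ | y) <;> simp [Loc, Triv, hd, h1, h2]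
  · by_cases hr : Q.rel a b
    · apply loc_eq Q v (some a, none) (some a', some b) (by simp)
      rintro (_ | x) (_ | y) <;> simp [Loc, Triv, hd, h1, h2] <;> grind
    · apply loc_eq Q v (some a', none) (some a, some b) (by simp)
      rintro (_ | x) (_ | y) <;> simp [Loc, Triv, hd, h1, h2] <;> grind
  · by_cases hr : Q.rel a b
    · have q1 : ¬ Q.rel a b' := fun h => hb (r2 _ _ _ hr h)
      have q2 : ¬ Q.rel a' b := fun h => ha (r1 _ _ _ hr h)
      have q3 : Q.rel a' b' := by
        by_contra h
        exact ha (n1 b' a a' (by grind) (by grind) q1 h)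
      apply loc_eq Q v (some a, some b') (some a', some b) (by simp [ha])
      rintro (_ | x) (_ | y) <;> simp [Loc, Triv, hd, h1, h2] <;> grind
    · have q1 : Q.rel a b' := by
        by_contra h
        exact hb (n2 a b b' (by grind) (by grind) hr h)
      have q2 : Q.rel a' b := by
        by_contra h
        exact ha (n1 b a a' (by grind) (by grind) hr h)
      have q3 : ¬ Q.rel a' b' := fun h => ha (r1 _ _ _ q1 h)
      apply loc_eq Q v (some a, some b) (some a', some b') (by simp [ha])
      rintro (_ | x) (_ | y) <;> simp [Loc, Triv, hd, h1, h2] <;> grind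

/-- Splits of permitted threads at `v`. -/
def Spl {V A : Type} (Q : BQuiv V A) (v : V) : Set (Path Q × ℕ) :=
  {x | IsPermThread Q x.1 ∧ x.2 ≤ x.1.arrows.length ∧ x.1.vertexAt x.2 = v}

/-- A split, described through its two halves. -/
structure Halves {V A : Type} (Q : BQuiv V A) (v : V) (u w : List A) (s : V) : Prop where
  chu : u.IsChain Q.Perm
  chw : w.IsChain Q.Perm
  tu : ∀ a c, u.head? = some a → ¬ Q.Perm c a
  tw : ∀ a c, w.getLast? = some a → ¬ Q.Perm a c
  loc : Q.Loc v u.getLast? w.head?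
  base : w.getLast?.elim v Q.src = s

theorem halves_iff {V A : Type} (Q : BQuiv V A) (v : V) (p : Path Q) (u w : List A)
    (h : p.arrows = u ++ w) :
    (IsPermThread Q p ∧ p.vertexAt u.length = v) ↔ Halves Q v u w p.base := by
  obtain ⟨s, l, hc, hs⟩ := p
  simp only at h
  subst h
  rcases List.eq_nil_or_concat' w with hw | ⟨w1, d, hw⟩
  · rcases List.eq_nil_or_concat' u with hu | ⟨u1, a, hu⟩
    · subst hu hw
      simp only [IsPermThread, Path.vertexAt]
      constructor
      · rintro ⟨h1, h2⟩
        simp at h1 h2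
        subst h2
        constructor <;> simp [Loc, Triv, h1]
      · intro h
        have h1 := h.loc
        have h2 := h.base
        simp [Loc, Triv] at h1 h2
        subst h2
        simp [h1]
    · subst hw
      rw [thread_iff _ _ (by simp [hu])]
      have hs' := hs a (by simp [hu])
      simp only [Path.vertexAt]
      constructor
      · rintro ⟨⟨h1, h2, h3⟩, h4⟩
        simp at h1 h2 h3 h4
        subst h4
        refine ⟨h1, by simp, by simpa using h2, by simp, ?_, by simp⟩
        simp [hu, Loc, hs']
        simp [hu, Perm] at h3
        grind
      · rintro ⟨h1, h2, h3, h4, h5, h6⟩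
        simp at h6
        subst h6
        simp [hu, Loc] at h5
        refine ⟨⟨by simpa using h1, by simpa using h3, ?_⟩, by simp⟩
        simp [hu, Perm]
        grind
  · obtain ⟨b, w0, hw0⟩ : ∃ b w0, w = b :: w0 := by
      cases w with
      | nil => simp at hw
      | cons b w0 => exact ⟨_, _, rfl⟩
    have hlast : w.getLast? = some d := by simp [hw]
    have hs' := hs d (by simp [hw])
    have hl : ∀ x, (u ++ w).getLast? = some x ↔ w.getLast? = some x := by simp [hw]
    rw [thread_iff _ _ (by simp [hw])]
    simp only [Path.vertexAt, hl]
    rcases List.eq_nil_or_concat' u with hu | ⟨u1, a, hu⟩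
    · subst hu
      constructor
      · rintro ⟨⟨h1, h2, h3⟩, h4⟩
        refine ⟨by simp, by simpa using h1, by simp, h3, ?_, by simp [hlast, hs']⟩
        simp [hw0, Perm, Loc] at h2 h4 ⊢
        grind
      · rintro ⟨h1, h2, h3, h4, h5, h6⟩
        simp [hw0, Loc] at h5
        refine ⟨⟨by simpa using h2, ?_, h4⟩, by simp [hw0, h5]⟩
        simp [hw0, Perm]
        grind
    · obtain ⟨a0, u0, hu0⟩ : ∃ b w0, u = b :: w0 := by
        cases u with
        | nil => simp at hu
        | cons b w0 => exact ⟨_, _, rfl⟩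
      have hh : ∀ x, (u ++ w).head? = some x ↔ u.head? = some x := by simp [hu0]
      have hul : u.getLast? = some a := by simp [hu]
      have hwh : w.head? = some b := by simp [hw0]
      simp only [hh, List.isChain_append, hul, hwh, List.drop_left]
      constructor
      · rintro ⟨⟨⟨h1, h1', h1''⟩, h2, h3⟩, h4⟩
        refine ⟨h1, h1', h2, h3, ?_, by simp [hlast, hs']⟩
        rw [hul, hwh]
        simp [Perm, Loc] at h1'' h4 ⊢
        grind
      · rintro ⟨h1, h2, h3, h4, h5, h6⟩
        rw [hul, hwh] at h5
        simp [Loc] at h5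
        refine ⟨⟨⟨h1, h2, ?_⟩, h3, h4⟩, by simp [h5]⟩
        simp [Perm]
        grind

theorem split_bij {V A : Type} (Q : BQuiv V A) (hQ : Q.IsGentle) (v : V) :
    Set.BijOn (fun x : Path Q × ℕ => ((x.1.arrows.take x.2).getLast?, (x.1.arrows.drop x.2).head?))
      (Spl Q v) {z | Q.Loc v z.1 z.2} := by
  have H : ∀ x ∈ Spl Q v, Halves Q v (x.1.arrows.take x.2) (x.1.arrows.drop x.2) x.1.base := by
    rintro ⟨p, n⟩ ⟨h1, h2, h3⟩
    rw [← halves_iff Q v p _ _ (List.take_append_drop _ _).symm]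
    simp only at h2
    refine ⟨h1, ?_⟩
    simpa [h2] using h3
  refine ⟨fun x hx => (H x hx).loc, ?_, ?_⟩
  · rintro ⟨p, n⟩ hx ⟨p', n'⟩ hx' he
    have g := H _ hx
    have g' := H _ hx'
    have hn : n ≤ p.arrows.length := hx.2.1
    have hn' : n' ≤ p'.arrows.length := hx'.2.1
    simp only [Prod.mk.injEq] at he g g'
    have hw := chain_unique Q.Perm
      (fun a b c h h' => hQ.unique_nonrel_pre a b c h.1 h'.1 h.2 h'.2) _ _ g.chw g'.chw he.2
      g.tw g'.tw
    have hu := chain_unique (fun a b => Q.Perm b a)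
      (fun a b c h h' => hQ.unique_nonrel_post a b c h.1 h'.1 h.2 h'.2)
      (p.arrows.take n).reverse (p'.arrows.take n').reverse
      (by rw [List.isChain_reverse]; exact g.chu) (by rw [List.isChain_reverse]; exact g'.chu)
      (by rw [List.head?_reverse, List.head?_reverse]; exact he.1)
      (by simp only [List.getLast?_reverse]; exact g.tu)
      (by simp only [List.getLast?_reverse]; exact g'.tu)
    rw [List.reverse_inj] at hu
    have hb : p.base = p'.base := by rw [← g.base, ← g'.base, hw]
    have ha : p.arrows = p'.arrows := by
      rw [← List.take_append_drop n p.arrows, hu, hw, List.take_append_drop]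
    have hnn : n = n' := by
      have := congrArg List.length hu
      simp at this
      omega
    cases p; cases p'
    simp_all
  · rintro ⟨x, y⟩ hxy
    simp only [Set.mem_setOf_eq] at hxy
    obtain ⟨m, -, hm⟩ := hQ.admissible
    have hm' : ∀ l : List A, l.length = m → ¬ l.IsChain Q.Perm := by
      intro l hl hc
      rw [perm_chain] at hc
      exact hm l hl hc.1 hc.2
    obtain ⟨w, w1, w2, w3⟩ := chain_exists Q.Perm m hm' y
    obtain ⟨u, u1, u2, u3⟩ := chain_exists (fun a b => Q.Perm b a) m (by
      intro l hl hc
      exact hm' l.reverse (by simpa) (by rw [List.isChain_reverse]; exact hc)) x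
    have hloc : Q.Loc v u.reverse.getLast? w.head? := by
      rw [List.getLast?_reverse, u2, w2]; exact hxy
    have hcc : (u.reverse ++ w).IsChain (fun a b => Q.src a = Q.tgt b) := by
      rw [List.isChain_append]
      refine ⟨((perm_chain Q _).1 (by rw [List.isChain_reverse]; exact u1)).1,
        ((perm_chain Q _).1 w1).1, ?_⟩
      intro a ha b hb
      rw [Option.mem_def] at ha hb
      rw [ha, hb] at hloc
      exact hloc.1.trans hloc.2.1.symm
    let p : Path Q := ⟨w.getLast?.elim v Q.src, u.reverse ++ w, hcc, by
      intro a ha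
      rw [List.getLast?_append] at ha
      cases hwl : w.getLast? with
      | some d => simp_all
      | none =>
        have hwn : w = [] := by simpa using hwl
        subst hwn
        simp at ha
        simp [ha, u2] at hloc
        simp [Loc, hxy] at hloc ⊢
        grind [Loc]⟩
    have hH : Halves Q v u.reverse w p.base :=
      ⟨by rw [List.isChain_reverse]; exact u1, w1, by rw [List.head?_reverse]; exact u3, w3,
        hloc, rfl⟩
    rw [← halves_iff Q v p _ _ rfl] at hH
    refine ⟨(p, u.length), ⟨hH.1, by simp [p], by simpa using hH.2⟩, ?_⟩
    have e1 : p.arrows.take u.length = u.reverse := List.take_left' (by simp)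
    have e2 : p.arrows.drop u.length = w := List.drop_left' (by simp)
    simp only [e1, e2, List.getLast?_reverse, u2, w2]

end BQuiv

open BQuiv

theorem stmt1 {V A : Type} [Fintype V] [Fintype A] (Q : BQuiv V A) (hQ : Q.IsGentle) :
    ∀ v : V,
      Nat.card {x : BQuiv.Path Q × ℕ //
        IsPermThread Q x.1 ∧ x.2 ≤ x.1.arrows.length ∧ x.1.vertexAt x.2 = v} = 2 := by
  intro v
  rw [← loc_card Q hQ v]
  exact Nat.card_congr (split_bij Q hQ v).equiv
end

section
/- Let (Q,I) be a gentle bound quiver containing no full cycle (equivalently, such that the gentle algebra kQ/I has finite global dimension). Then: (a) every non-trivial forbidden path of (Q,I) is a subpath of exactly one forbidden thread; (b) every vertex of Q is the center of exactly two split forbidden threads; (c) for each vertex i of Q there exists at most one almost-full cycle at i, and any almost-full cycle has length at least 2. -/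
set_option autoImplicit false

attribute [local instance] Classical.propDecidable

namespace BQuiv

variable {V A : Type}

/-- A full cycle: a non-trivial closed forbidden path without repeated arrows whose
wrap-around length-two subpath is again a relation. -/
def IsFullCycle (Q : BQuiv V A) (p : Path Q) : Prop :=
  p.arrows ≠ [] ∧ p.Forbidden ∧ p.tgtV = p.base ∧ p.arrows.Nodup ∧
  ∀ a b, p.arrows.getLast? = some a → p.arrows.head? = some b → Q.rel a b

/-- An almost-full cycle at the vertex `i`: a non-trivial closed forbidden path without
repeated arrows, with source (= target) `i`, whose wrap-around length-two subpath is
not a relation. -/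
def IsAlmostFullCycleAt (Q : BQuiv V A) (p : Path Q) (i : V) : Prop :=
  p.base = i ∧ p.arrows ≠ [] ∧ p.Forbidden ∧ p.tgtV = p.base ∧ p.arrows.Nodup ∧
  ∀ a b, p.arrows.getLast? = some a → p.arrows.head? = some b → ¬ Q.rel a b

end BQuiv

namespace BQuiv

theorem aux_not_nodup {A : Type} : ∀ l : List A, ¬ l.Nodup →
    ∃ x a y z, l = x ++ a :: (y ++ a :: z)
  | [], h => by simp at h
  | b :: l, h => by
    by_cases hb : b ∈ l
    · obtain ⟨y, z, rfl⟩ := List.append_of_mem hb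
      exact ⟨[], b, y, z, rfl⟩
    · have h' : ¬ l.Nodup := fun hn => h (List.nodup_cons.2 ⟨hb, hn⟩)
      obtain ⟨x, a, y, z, rfl⟩ := aux_not_nodup l h'
      exact ⟨b :: x, a, y, z, rfl⟩

theorem aux_cycle {A : Type} (R : A → A → Prop)
    (hno : ∀ a y, (a :: y).Nodup → ¬ List.IsChain R (a :: (y ++ [a]))) :
    ∀ (n : ℕ) (a : A) (y : List A), y.length = n → ¬ List.IsChain R (a :: (y ++ [a])) := by
  intro n
  induction n using Nat.strong_induction_on with
  | _ n ih =>
    intro a y hy hc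
    by_cases hn : (a :: y).Nodup
    · exact hno a y hn hc
    · obtain ⟨x, b, u, z, h⟩ := aux_not_nodup _ hn
      have hc2 : List.IsChain R (b :: (u ++ [b])) := by
        refine hc.infix ⟨x, z ++ [a], ?_⟩
        have : a :: (y ++ [a]) = (a :: y) ++ [a] := rfl
        rw [this, h]; simp
      have hl := congrArg List.length h
      simp at hl
      exact ih u.length (by omega) b u rfl hc2

theorem aux_nodup {A : Type} (R : A → A → Prop)
    (hno : ∀ a y, (a :: y).Nodup → ¬ List.IsChain R (a :: (y ++ [a])))
    (l : List A) (hl : List.IsChain R l) : l.Nodup := by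
  by_contra hn
  obtain ⟨x, b, u, z, rfl⟩ := aux_not_nodup _ hn
  exact aux_cycle R hno _ b u rfl (hl.infix ⟨x, z, by simp⟩)

theorem aux_det {A : Type} (R : A → A → Prop) (hR : ∀ b c c', R b c → R b c' → c = c') :
    ∀ (y y' : List A) (a : A), List.IsChain R (a :: y) → List.IsChain R (a :: y') →
    (∀ z c, (a :: y).getLast? = some z → ¬ R z c) →
    (∀ z c, (a :: y').getLast? = some z → ¬ R z c) → y = y'
  | [], [], _, _, _, _, _ => rfl
  | [], c :: y', a, _, h2, h3, _ => by
    rw [List.isChain_cons_cons] at h2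
    exact absurd h2.1 (h3 a c (by simp))
  | c :: y, [], a, h1, _, _, h4 => by
    rw [List.isChain_cons_cons] at h1
    exact absurd h1.1 (h4 a c (by simp))
  | c :: y, c' :: y', a, h1, h2, h3, h4 => by
    rw [List.isChain_cons_cons] at h1 h2
    obtain rfl := hR a c c' h1.1 h2.1
    rw [aux_det R hR y y' c h1.2 h2.2 (by simpa using h3) (by simpa using h4)]

def AuxMax {A : Type} (R : A → A → Prop) (l : List A) : Prop :=
  List.IsChain R l ∧ (∀ a b, l.head? = some b → ¬ R a b) ∧
    (∀ a c, l.getLast? = some a → ¬ R a c)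

theorem aux_uniq {A : Type} (R : A → A → Prop) (hR : ∀ b c c', R b c → R b c' → c = c')
    (hR' : ∀ b c c', R c b → R c' b → c = c') (x y x' y' : List A) (a : A)
    (h : AuxMax R (x ++ a :: y)) (h' : AuxMax R (x' ++ a :: y')) : x = x' ∧ y = y' := by
  constructor
  · apply List.reverse_injective
    have e : ∀ x : List A, a :: x.reverse = (x ++ [a]).reverse := by simp
    have e2 : ∀ x y : List A, (x ++ [a]).head? = (x ++ a :: y).head? := by
      intro x y; cases x <;> simp
    refine aux_det (fun b c => R c b) hR' _ _ a ?_ ?_ ?_ ?_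
    · rw [e, List.isChain_reverse]
      exact h.1.infix ⟨[], y, by simp⟩
    · rw [e, List.isChain_reverse]
      exact h'.1.infix ⟨[], y', by simp⟩
    · intro z c hz
      rw [e, List.getLast?_reverse, e2 x y] at hz
      exact h.2.1 c z hz
    · intro z c hz
      rw [e, List.getLast?_reverse, e2 x' y'] at hz
      exact h'.2.1 c z hz
  · refine aux_det R hR _ _ a (h.1.infix ⟨x, [], by simp⟩) (h'.1.infix ⟨x', [], by simp⟩) ?_ ?_
    · intro z c hz; exact h.2.2 z c (by rw [List.getLast?_append, hz]; rfl)
    · intro z c hz; exact h'.2.2 z c (by rw [List.getLast?_append, hz]; rfl)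

theorem aux_exists {A : Type} (R : A → A → Prop) (N : ℕ)
    (hN : ∀ l, List.IsChain R l → l.length ≤ N) :
    ∀ (k : ℕ) (l : List A), l ≠ [] → List.IsChain R l → N - l.length = k →
      ∃ m, AuxMax R m ∧ l <:+: m := by
  intro k
  induction k with
  | zero =>
    intro l hl hc hk
    have h0 := hN l hc
    refine ⟨l, ⟨hc, ?_, ?_⟩, List.infix_rfl⟩
    · intro a b hb hr
      have : List.IsChain R (a :: l) := by
        rw [List.isChain_cons]; refine ⟨?_, hc⟩
        intro y hy; rw [hb] at hy; simp at hy; subst hy; exact hr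
      have := hN _ this
      simp at this; omega
    · intro a c ha hr
      have : List.IsChain R (l ++ [c]) := by
        rw [List.isChain_append]; refine ⟨hc, by simp, ?_⟩
        intro y hy z hz; rw [ha] at hy; simp at hy hz; subst hy; subst hz; exact hr
      have := hN _ this
      simp at this; omega
  | succ k ih =>
    intro l hl hc hk
    by_cases h1 : ∃ a b, l.head? = some b ∧ R a b
    · obtain ⟨a, b, hb, hr⟩ := h1
      have : List.IsChain R (a :: l) := by
        rw [List.isChain_cons]; refine ⟨?_, hc⟩
        intro y hy; rw [hb] at hy; simp at hy; subst hy; exact hr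
      obtain ⟨m, hm, hi⟩ := ih (a :: l) (by simp) this (by simp; omega)
      exact ⟨m, hm, (List.infix_cons List.infix_rfl).trans hi⟩
    by_cases h2 : ∃ a c, l.getLast? = some a ∧ R a c
    · obtain ⟨a, c, ha, hr⟩ := h2
      have : List.IsChain R (l ++ [c]) := by
        rw [List.isChain_append]; refine ⟨hc, by simp, ?_⟩
        intro y hy z hz; rw [ha] at hy; simp at hy hz; subst hy; subst hz; exact hr
      obtain ⟨m, hm, hi⟩ := ih (l ++ [c]) (by simp) this (by simp; omega)
      exact ⟨m, hm, List.IsInfix.trans ⟨[], [c], by simp⟩ hi⟩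
    push Not at h1 h2
    exact ⟨l, ⟨hc, h1, h2⟩, List.infix_rfl⟩

variable {V A : Type}

theorem aux_noCycle (Q : BQuiv V A) (hQ : Q.IsGentle)
    (hfc : ¬ ∃ p : Path Q, IsFullCycle Q p) :
    ∀ a y, (a :: y).Nodup → ¬ List.IsChain Q.rel (a :: (y ++ [a])) := by
  intro a y hn hc
  have hc1 : List.IsChain Q.rel (a :: y) := hc.infix ⟨[], [a], by simp⟩
  have hlast : ∀ z, (a :: y).getLast? = some z → Q.rel z a := by
    have : a :: (y ++ [a]) = (a :: y) ++ [a] := rfl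
    rw [this, List.isChain_append] at hc
    intro z hz
    exact hc.2.2 z hz a (by simp)
  refine hfc ⟨⟨Q.tgt a, a :: y, hc1.imp (fun _ _ h => hQ.rel_comp _ _ h), ?_⟩, ?_⟩
  · intro z hz
    exact hQ.rel_comp _ _ (hlast z hz)
  · refine ⟨by simp, hc1, rfl, hn, ?_⟩
    intro z b hz hb
    simp at hb
    subst hb
    exact hlast z hz

theorem aux_path_ext {Q : BQuiv V A} (p q : Path Q) (hne : p.arrows ≠ [])
    (h : p.arrows = q.arrows) : p = q := by
  obtain ⟨b, l, hc, hb⟩ := p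
  obtain ⟨b', l', hc', hb'⟩ := q
  dsimp at h hne
  subst h
  have h1 := hb _ (List.getLast?_eq_some_getLast hne)
  have h2 := hb' _ (List.getLast?_eq_some_getLast hne)
  obtain rfl : b = b' := h1.symm.trans h2
  rfl

theorem aux_thread_iff (Q : BQuiv V A) (hQ : Q.IsGentle) (p : Path Q) (hne : p.arrows ≠ []) :
    IsForbThread Q p ↔ AuxMax Q.rel p.arrows := by
  constructor
  · rintro (⟨_, h1, h2, h3⟩ | h)
    · exact ⟨h1, fun a b hb hr => h2 a b hb (hQ.rel_comp _ _ hr) hr,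
        fun a b hb hr => h3 a b hb (hQ.rel_comp _ _ hr) hr⟩
    · exact absurd h.1 hne
  · intro h
    exact Or.inl ⟨hne, h.1, fun a b hb _ => h.2.1 a b hb, fun a b hb _ => h.2.2 a b hb⟩

theorem aux_partA [Fintype A] (Q : BQuiv V A) (hQ : Q.IsGentle)
    (hfc : ¬ ∃ p : Path Q, IsFullCycle Q p) (l : List A) (hl : l ≠ [])
    (hc : List.IsChain Q.rel l) :
    ∃ p : Path Q, IsForbThread Q p ∧ l <:+: p.arrows := by
  obtain ⟨m, hm, hi⟩ := aux_exists Q.rel (Fintype.card A)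
    (fun l h => (aux_nodup _ (aux_noCycle Q hQ hfc) l h).length_le_card) _ l hl hc rfl
  have hne : m ≠ [] := by rintro rfl; exact hl (List.infix_nil.1 hi)
  refine ⟨⟨Q.src (m.getLast hne), m, hm.1.imp (fun _ _ h => hQ.rel_comp _ _ h), ?_⟩, ?_, hi⟩
  · intro a ha
    rw [List.getLast?_eq_some_getLast hne] at ha
    simp at ha
    rw [ha]
  · exact (aux_thread_iff Q hQ _ hne).2 hm

theorem aux_thread_uniq (Q : BQuiv V A) (hQ : Q.IsGentle) (p q : Path Q)
    (hp : IsForbThread Q p) (hq : IsForbThread Q q) (a : A) (x y x' y' : List A)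
    (h : p.arrows = x ++ a :: y) (h' : q.arrows = x' ++ a :: y') :
    p = q ∧ x = x' ∧ y = y' := by
  have hpn : p.arrows ≠ [] := by simp [h]
  have hqn : q.arrows ≠ [] := by simp [h']
  have hp' := (aux_thread_iff Q hQ p hpn).1 hp
  have hq' := (aux_thread_iff Q hQ q hqn).1 hq
  rw [h] at hp'
  rw [h'] at hq'
  have := aux_uniq Q.rel hQ.unique_rel_pre hQ.unique_rel_post x y x' y' a hp' hq'
  exact ⟨aux_path_ext p q hpn (by rw [h, h', this.1, this.2]), this⟩

/-- The set of local configurations at a vertex. -/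
def AuxT (Q : BQuiv V A) (v : V) : Set (Option A × Option A) :=
  {t | match t with
    | (some a, some b) => Q.src a = v ∧ Q.tgt b = v ∧ Q.rel a b
    | (some a, none) => Q.src a = v ∧ ∀ b, ¬ Q.rel a b
    | (none, some b) => Q.tgt b = v ∧ ∀ a, ¬ Q.rel a b
    | (none, none) => (Q.deg v = 1 ∨ (Q.deg v = 2 ∧
        ∃ α β, Q.src α = v ∧ Q.tgt β = v ∧ Q.rel α β))}

theorem aux_noloop (Q : BQuiv V A) (hQ : Q.IsGentle)
    (hfc : ¬ ∃ p : Path Q, IsFullCycle Q p) (a : A) : Q.src a ≠ Q.tgt a := by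
  intro h
  by_cases hr : Q.rel a a
  · exact aux_noCycle Q hQ hfc a [] (by simp) (by simpa using hr)
  · obtain ⟨m, -, hm⟩ := hQ.admissible
    exact hm (List.replicate m a) (by simp) (List.isChain_replicate_of_rel _ h)
      (List.isChain_replicate_of_rel _ hr)

theorem aux_partC [Fintype A] (Q : BQuiv V A) (hQ : Q.IsGentle)
    (hfc : ¬ ∃ p : Path Q, IsFullCycle Q p) (i : V) (p q : Path Q)
    (hp : IsAlmostFullCycleAt Q p i) (hq : IsAlmostFullCycleAt Q q i) : p = q := by
  obtain ⟨hp1, hp2, hp3, hp4, hp5, hp6⟩ := hp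
  obtain ⟨hq1, hq2, hq3, hq4, hq5, hq6⟩ := hq
  have hpb := p.base_eq _ (List.getLast?_eq_some_getLast hp2)
  have hqb := q.base_eq _ (List.getLast?_eq_some_getLast hq2)
  have hp7 := hp6 _ _ (List.getLast?_eq_some_getLast hp2) (List.head?_eq_some_head hp2)
  have hq7 := hq6 _ _ (List.getLast?_eq_some_getLast hq2) (List.head?_eq_some_head hq2)
  unfold Path.tgtV at hp4 hq4
  rw [List.head?_eq_some_head hp2] at hp4
  rw [List.head?_eq_some_head hq2] at hq4
  simp only [Option.elim] at hp4 hq4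
  by_cases hh : p.arrows.head hp2 = q.arrows.head hq2
  · have hlast : p.arrows.getLast hp2 = q.arrows.getLast hq2 := by
      refine hQ.unique_nonrel_post (p.arrows.head hp2) _ _ ?_ ?_ hp7 (hh ▸ hq7)
      · rw [hpb, hp4]
      · rw [hqb, hp4, hp1, hq1]
    -- both are the initial segment of the thread ending at the common last arrow
    have main : ∀ (l l' : List A) (h : l ≠ []) (h' : l' ≠ []), List.IsChain Q.rel l →
        List.IsChain Q.rel l' → l.head h = l'.head h' → l.getLast h = l'.getLast h' →
        l.Nodup → l'.Nodup → l = l' := by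
      intro l
      induction l with
      | nil => intro l' h; exact absurd rfl h
      | cons a l ih =>
        intro l' h h' hc hc' hhd hla hn hn'
        cases l' with
        | nil => exact absurd rfl h'
        | cons b l' =>
          simp only [List.head_cons] at hhd
          subst hhd
          cases l with
          | nil =>
            cases l' with
            | nil => rfl
            | cons c l' =>
              exfalso
              simp only [List.getLast_singleton] at hla
              rw [List.getLast_cons (by simp)] at hla
              rw [List.nodup_cons] at hn'
              apply hn'.1
              rw [hla]
              exact List.getLast_mem _
          | cons c l =>
            cases l' with
            | nil =>
              exfalso
              simp only [List.getLast_singleton] at hla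
              rw [List.getLast_cons (by simp)] at hla
              rw [List.nodup_cons] at hn
              apply hn.1
              rw [← hla]
              exact List.getLast_mem _
            | cons d l' =>
              rw [List.isChain_cons_cons] at hc hc'
              have := hQ.unique_rel_pre _ _ _ hc.1 hc'.1
              rw [ih (d :: l') (by simp) (by simp) hc.2 hc'.2 (by simpa using this)
                (by rwa [List.getLast_cons (List.cons_ne_nil c l),
                  List.getLast_cons (List.cons_ne_nil d l')] at hla)
                (List.nodup_cons.1 hn).2 (List.nodup_cons.1 hn').2]
    exact aux_path_ext p q hp2 (main _ _ hp2 hq2 hp3 hq3 hh hlast hp5 hq5)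
  · exfalso
    have r1 : Q.rel (p.arrows.getLast hp2) (q.arrows.head hq2) := by
      by_contra hr
      exact hh (hQ.unique_nonrel_pre (p.arrows.getLast hp2) _ _ (by rw [hpb, hp4])
        (by rw [hpb, hq4, hp1, hq1]) hp7 hr)
    have r2 : Q.rel (q.arrows.getLast hq2) (p.arrows.head hp2) := by
      by_contra hr
      exact hh (hQ.unique_nonrel_pre (q.arrows.getLast hq2) _ _ (by rw [hqb, hp4, hp1, hq1])
        (by rw [hqb, hq4]) hr hq7)
    have hc1 : List.IsChain Q.rel (p.arrows ++ q.arrows) := by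
      rw [List.isChain_append]
      refine ⟨hp3, hq3, ?_⟩
      intro x hx y hy
      rw [List.getLast?_eq_some_getLast hp2] at hx
      rw [List.head?_eq_some_head hq2] at hy
      simp at hx hy
      rw [← hx, ← hy]; exact r1
    have hc : List.IsChain Q.rel ((p.arrows ++ q.arrows) ++ [p.arrows.head hp2]) := by
      rw [List.isChain_append]
      refine ⟨hc1, by simp, ?_⟩
      intro x hx y hy
      rw [List.getLast?_append, List.getLast?_eq_some_getLast hq2] at hx
      simp at hx hy
      rw [← hx, ← hy]; exact r2
    have := aux_nodup _ (aux_noCycle Q hQ hfc) _ hc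
    rw [List.nodup_append] at this
    exact this.2.2 _ (List.mem_append_left _ (List.head_mem hp2)) _ (by simp) rfl

theorem aux_two {A : Type} [Fintype A] (P : A → Prop) (h : Nat.card {a : A // P a} ≤ 2) :
    (Nat.card {a : A // P a} = 0 ∧ ∀ a, ¬ P a) ∨
    (Nat.card {a : A // P a} = 1 ∧ ∃ a, ∀ x, P x ↔ x = a) ∨
    (Nat.card {a : A // P a} = 2 ∧ ∃ a b, a ≠ b ∧ ∀ x, P x ↔ x = a ∨ x = b) := by
  have e : Nat.card {a : A // P a} = Set.ncard {a | P a} := rfl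
  have : Nat.card {a : A // P a} = 0 ∨ Nat.card {a : A // P a} = 1 ∨
    Nat.card {a : A // P a} = 2 := by omega
  rcases this with h | h | h
  · refine Or.inl ⟨h, ?_⟩
    rw [e, Set.ncard_eq_zero (Set.toFinite _)] at h
    intro a ha
    have : a ∈ {a | P a} := ha
    rw [h] at this
    exact this
  · refine Or.inr (Or.inl ⟨h, ?_⟩)
    rw [e, Set.ncard_eq_one] at h
    obtain ⟨a, ha⟩ := h
    exact ⟨a, fun x => by simpa using Set.ext_iff.1 ha x⟩
  · refine Or.inr (Or.inr ⟨h, ?_⟩)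
    rw [e, Set.ncard_eq_two] at h
    obtain ⟨a, b, hab, ha⟩ := h
    exact ⟨a, b, hab, fun x => by simpa using Set.ext_iff.1 ha x⟩

theorem aux_deg_pos (Q : BQuiv V A) (hQ : Q.IsGentle) (v : V) :
    ∃ a, Q.src a = v ∨ Q.tgt a = v := by
  obtain ⟨a⟩ := hQ.has_arrow
  rcases Relation.ReflTransGen.cases_head (hQ.connected v (Q.src a)) with h | ⟨c, ⟨b, hb⟩, _⟩
  · exact ⟨a, Or.inl h.symm⟩
  · exact ⟨b, by tauto⟩

set_option maxHeartbeats 2000000 in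
theorem aux_cardT [Fintype A] (Q : BQuiv V A) (hQ : Q.IsGentle)
    (hfc : ¬ ∃ p : Path Q, IsFullCycle Q p) (v : V) : (AuxT Q v).ncard = 2 := by
  rw [Set.ncard_eq_two]
  have hcomp := hQ.rel_comp
  have hnp := hQ.unique_nonrel_post
  have hne := hQ.unique_nonrel_pre
  have hrp := hQ.unique_rel_post
  have hre := hQ.unique_rel_pre
  have hd : Q.deg v = Nat.card {a : A // Q.src a = v} + Nat.card {a : A // Q.tgt a = v} := rfl
  have key : ∀ t1 t2 : Option A × Option A, t1 ≠ t2 →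
      (∀ a b, (Q.src a = v ∧ Q.tgt b = v ∧ Q.rel a b) ↔
        (some a, some b) = t1 ∨ (some a, some b) = t2) →
      (∀ a, (Q.src a = v ∧ ∀ b, ¬ Q.rel a b) ↔ (some a, none) = t1 ∨ (some a, none) = t2) →
      (∀ b, (Q.tgt b = v ∧ ∀ a, ¬ Q.rel a b) ↔ (none, some b) = t1 ∨ (none, some b) = t2) →
      ((Q.deg v = 1 ∨ (Q.deg v = 2 ∧ ∃ α β, Q.src α = v ∧ Q.tgt β = v ∧ Q.rel α β)) ↔
        (none, none) = t1 ∨ (none, none) = t2) →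
      ∃ x y, x ≠ y ∧ AuxT Q v = {x, y} := by
    intro t1 t2 hn h1 h2 h3 h4
    refine ⟨t1, t2, hn, ?_⟩
    ext ⟨x, y⟩
    cases x with
    | none =>
      cases y with
      | none => exact h4
      | some b => exact h3 b
    | some a =>
      cases y with
      | none => exact h2 a
      | some b => exact h1 a b
  obtain ⟨e, he⟩ := aux_deg_pos Q hQ v
  rcases aux_two _ (hQ.out_le v) with ⟨ho, ho'⟩ | ⟨ho, a, ho'⟩ | ⟨ho, a, a', haa, ho'⟩ <;>
  rcases aux_two _ (hQ.in_le v) with ⟨hi, hi'⟩ | ⟨hi, b, hi'⟩ | ⟨hi, b, b', hbb, hi'⟩ <;>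
  rw [ho, hi] at hd
  · grind
  · refine key (none, some b) (none, none) ?_ ?_ ?_ ?_ ?_ <;> grind
  · refine key (none, some b) (none, some b') ?_ ?_ ?_ ?_ ?_ <;> grind
  · refine key (some a, none) (none, none) ?_ ?_ ?_ ?_ ?_ <;> grind
  · by_cases hr : Q.rel a b
    · refine key (some a, some b) (none, none) ?_ ?_ ?_ ?_ ?_ <;> grind
    · refine key (some a, none) (none, some b) ?_ ?_ ?_ ?_ ?_ <;> grind
  · have sa : Q.src a = v := (ho' a).2 rfl
    have tb : Q.tgt b = v := (hi' b).2 (Or.inl rfl)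
    have tb' : Q.tgt b' = v := (hi' b').2 (Or.inr rfl)
    have f1 := hne a b b' (sa.trans tb.symm) (sa.trans tb'.symm)
    have f2 := hre a b b'
    by_cases hr : Q.rel a b
    · have hr' : ¬ Q.rel a b' := by tauto
      refine key (some a, some b) (none, some b') ?_ ?_ ?_ ?_ ?_ <;> clear key <;> grind
    · have hr' : Q.rel a b' := by tauto
      refine key (some a, some b') (none, some b) ?_ ?_ ?_ ?_ ?_ <;> clear key <;> grind
  · refine key (some a, none) (some a', none) ?_ ?_ ?_ ?_ ?_ <;> grind
  · have sa : Q.src a = v := (ho' a).2 (Or.inl rfl)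
    have sa' : Q.src a' = v := (ho' a').2 (Or.inr rfl)
    have tb : Q.tgt b = v := (hi' b).2 rfl
    have f1 := hnp b a a' (sa.trans tb.symm) (sa'.trans tb.symm)
    have f2 := hrp b a a'
    by_cases hr : Q.rel a b
    · have hr' : ¬ Q.rel a' b := by tauto
      refine key (some a, some b) (some a', none) ?_ ?_ ?_ ?_ ?_ <;> clear key <;> grind
    · have hr' : Q.rel a' b := by tauto
      refine key (some a', some b) (some a, none) ?_ ?_ ?_ ?_ ?_ <;> clear key <;> grind
  · have sa : Q.src a = v := (ho' a).2 (Or.inl rfl)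
    have sa' : Q.src a' = v := (ho' a').2 (Or.inr rfl)
    have tb : Q.tgt b = v := (hi' b).2 (Or.inl rfl)
    have tb' : Q.tgt b' = v := (hi' b').2 (Or.inr rfl)
    have f1 := hne a b b' (sa.trans tb.symm) (sa.trans tb'.symm)
    have f2 := hre a b b'
    have f3 := hne a' b b' (sa'.trans tb.symm) (sa'.trans tb'.symm)
    have f4 := hre a' b b'
    have f5 := hnp b a a' (sa.trans tb.symm) (sa'.trans tb.symm)
    have f6 := hrp b a a'
    by_cases hr : Q.rel a b
    · have r1 : ¬ Q.rel a b' := fun h => hbb (f2 hr h)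
      have r2 : ¬ Q.rel a' b := fun h => haa (f6 hr h)
      have r3 : Q.rel a' b' := by_contra fun h => hbb (f3 r2 h)
      refine key (some a, some b) (some a', some b') ?_ ?_ ?_ ?_ ?_ <;> clear key <;> grind
    · have r1 : Q.rel a b' := by_contra fun h => hbb (f1 hr h)
      have r2 : Q.rel a' b := by_contra fun h => haa (f5 hr h)
      have r3 : ¬ Q.rel a' b' := fun h => hbb (f4 r2 h)
      refine key (some a, some b') (some a', some b) ?_ ?_ ?_ ?_ ?_ <;> clear key <;> grind

/-- The two arrows around a split. -/
def auxF {Q : BQuiv V A} (x : Path Q × ℕ) : Option A × Option A :=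
  ((x.1.arrows.take x.2).getLast?, (x.1.arrows.drop x.2).head?)

theorem aux_fst {l : List A} {n : ℕ} {a : A} (hn : n ≤ l.length)
    (h : (l.take n).getLast? = some a) :
    ∃ x, l = x ++ a :: l.drop n ∧ n = x.length + 1 := by
  obtain ⟨x, hx⟩ := List.getLast?_eq_some_iff.1 h
  refine ⟨x, ?_, ?_⟩
  · conv_lhs => rw [← List.take_append_drop n l, hx]
    simp
  · have := congrArg List.length hx
    simp at this
    omega

theorem aux_snd {l : List A} {n : ℕ} {b : A} (hn : n ≤ l.length)
    (h : (l.drop n).head? = some b) :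
    ∃ y, l = l.take n ++ b :: y ∧ n = (l.take n).length := by
  obtain ⟨y, hy⟩ := List.head?_eq_some_iff.1 h
  refine ⟨y, ?_, ?_⟩
  · rw [← hy, List.take_append_drop]
  · simp; omega

theorem aux_partB [Fintype A] (Q : BQuiv V A) (hQ : Q.IsGentle)
    (hfc : ¬ ∃ p : Path Q, IsFullCycle Q p) (v : V) :
    Nat.card {x : Path Q × ℕ //
        IsForbThread Q x.1 ∧ x.2 ≤ x.1.arrows.length ∧ x.1.vertexAt x.2 = v} = 2 := by
  rw [← aux_cardT Q hQ hfc v]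
  change Nat.card ({x : Path Q × ℕ | IsForbThread Q x.1 ∧ x.2 ≤ x.1.arrows.length ∧
    x.1.vertexAt x.2 = v} : Set _) = Nat.card (AuxT Q v)
  have hbij : Set.BijOn auxF {x : Path Q × ℕ | IsForbThread Q x.1 ∧ x.2 ≤ x.1.arrows.length ∧
    x.1.vertexAt x.2 = v} (AuxT Q v) := by
    refine ⟨?_, ?_, ?_⟩
    · rintro ⟨p, n⟩ ⟨hp, hn, hv⟩
      dsimp only at hp hn hv
      unfold Path.vertexAt at hv
      show ((p.arrows.take n).getLast?, (p.arrows.drop n).head?) ∈ AuxT Q v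
      rcases h1 : (p.arrows.take n).getLast? with _ | a <;>
      rcases h2 : (p.arrows.drop n).head? with _ | b
      · have e1 := List.getLast?_eq_none_iff.1 h1
        have e2 := List.head?_eq_none_iff.1 h2
        have e : p.arrows = [] := by rw [← List.take_append_drop n p.arrows, e1, e2]; rfl
        rw [h2] at hv
        simp only [Option.elim] at hv
        rcases hp with hp | hp
        · exact absurd e hp.1
        · rw [hv] at hp; exact hp.2
      · have e1 := List.getLast?_eq_none_iff.1 h1
        obtain ⟨y, hy, -⟩ := aux_snd hn h2
        rw [e1] at hy
        have hm := (aux_thread_iff Q hQ p (by rw [hy]; simp)).1 hp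
        rw [h2] at hv
        exact ⟨hv, fun a => hm.2.1 a b (by rw [hy]; rfl)⟩
      · have e2 := List.head?_eq_none_iff.1 h2
        obtain ⟨x, hx, -⟩ := aux_fst hn h1
        rw [e2] at hx
        have hm := (aux_thread_iff Q hQ p (by rw [hx]; simp)).1 hp
        rw [h2] at hv
        have hl : p.arrows.getLast? = some a := by rw [hx]; simp
        exact ⟨(p.base_eq a hl).trans hv, fun b => hm.2.2 a b hl⟩
      · obtain ⟨x, hx, -⟩ := aux_fst hn h1
        obtain ⟨y, hy⟩ := List.head?_eq_some_iff.1 h2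
        rw [hy] at hx
        have hm := (aux_thread_iff Q hQ p (by rw [hx]; simp)).1 hp
        rw [h2] at hv
        have hr : Q.rel a b := by
          have := hm.1.infix (l₁ := [a, b]) ⟨x, y, by rw [hx]; simp⟩
          simpa using this
        exact ⟨(hQ.rel_comp _ _ hr).trans hv, hv, hr⟩
    · rintro ⟨p, n⟩ ⟨hp, hn, hv⟩ ⟨q, m⟩ ⟨hq, hm, hw⟩ h
      dsimp only at hp hn hv hq hm hw
      have h1 : (p.arrows.take n).getLast? = (q.arrows.take m).getLast? := congrArg Prod.fst h
      have h2 : (p.arrows.drop n).head? = (q.arrows.drop m).head? := congrArg Prod.snd h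
      rcases h3 : (p.arrows.take n).getLast? with _ | a
      · rcases h4 : (p.arrows.drop n).head? with _ | b
        · unfold Path.vertexAt at hv hw
          rw [← h2, h4] at hw
          rw [h4] at hv
          simp only [Option.elim] at hv hw
          have e1 := List.getLast?_eq_none_iff.1 h3
          have e2 := List.head?_eq_none_iff.1 h4
          have e : p.arrows = [] := by rw [← List.take_append_drop n p.arrows, e1, e2]; rfl
          have e1' := List.getLast?_eq_none_iff.1 (h1.symm.trans h3)
          have e2' := List.head?_eq_none_iff.1 (h2.symm.trans h4)
          have e' : q.arrows = [] := by
            rw [← List.take_append_drop m q.arrows, e1', e2']; rfl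
          rw [e] at hn
          rw [e'] at hm
          obtain rfl : n = 0 := by simpa using hn
          obtain rfl : m = 0 := by simpa using hm
          obtain ⟨pb, pl, _, _⟩ := p
          obtain ⟨qb, ql, _, _⟩ := q
          dsimp only at e e' hv hw
          subst e e' hv hw
          rfl
        · obtain ⟨y, hy, hy'⟩ := aux_snd hn h4
          obtain ⟨z, hz, hz'⟩ := aux_snd hm (h2.symm.trans h4)
          obtain ⟨rfl, hx, -⟩ := aux_thread_uniq Q hQ p q hp hq b _ _ _ _ hy hz
          rw [hx] at hy'
          rw [hy'.trans hz'.symm]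
      · obtain ⟨x, hx, hx'⟩ := aux_fst hn h3
        obtain ⟨z, hz, hz'⟩ := aux_fst hm (h1.symm.trans h3)
        obtain ⟨rfl, rfl, -⟩ := aux_thread_uniq Q hQ p q hp hq a _ _ _ _ hx hz
        rw [hx', hz']
    · rintro ⟨x, y⟩ ht
      cases x with
      | none =>
        cases y with
        | none =>
          refine ⟨(⟨v, [], List.isChain_nil, by simp⟩, 0), ⟨Or.inr ⟨rfl, ht⟩, by simp, rfl⟩, rfl⟩
        | some b =>
          obtain ⟨hv, hr⟩ := ht
          obtain ⟨p, hp, s, t, hst⟩ := aux_partA Q hQ hfc [b] (by simp) (by simp)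
          have hm := (aux_thread_iff Q hQ p (by rw [← hst]; simp)).1 hp
          have hs : s = [] := by
            rcases List.eq_nil_or_concat s with h | ⟨s', c, h⟩
            · exact h
            · exfalso
              have := hm.1.infix (l₁ := [c, b]) ⟨s', t, by rw [← hst, h]; simp⟩
              exact hr c (by simpa using this)
          subst hs
          have hst' : p.arrows = b :: t := by rw [← hst]; rfl
          refine ⟨(p, 0), ⟨hp, by simp, ?_⟩, ?_⟩
          · simp [Path.vertexAt, hst', hv]
          · simp [auxF, hst']
      | some a =>
        obtain ⟨p, hp, s, t, hst⟩ := aux_partA Q hQ hfc [a] (by simp) (by simp)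
        have hst' : p.arrows = (s ++ [a]) ++ t := hst.symm
        have hlen : s.length + 1 = (s ++ [a]).length := by simp
        have hm := (aux_thread_iff Q hQ p (by rw [← hst]; simp)).1 hp
        have h1 : p.arrows.take (s.length + 1) = s ++ [a] := by
          rw [hst', hlen, List.take_left]
        have h2 : p.arrows.drop (s.length + 1) = t := by
          rw [hst', hlen, List.drop_left]
        have hn : s.length + 1 ≤ p.arrows.length := by rw [hst']; simp
        have hrel : ∀ c t', t = c :: t' → Q.rel a c := by
          intro c t' h
          have := hm.1.infix (l₁ := [a, c]) ⟨s, t', by rw [hst', h]; simp⟩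
          simpa using this
        cases y with
        | none =>
          obtain ⟨hv, hr⟩ := ht
          have ht : t = [] := by
            cases t with
            | nil => rfl
            | cons c t' => exact absurd (hrel c t' rfl) (hr c)
          refine ⟨(p, s.length + 1), ⟨hp, hn, ?_⟩, ?_⟩
          · show ((p.arrows.drop (s.length + 1)).head?).elim p.base Q.tgt = v
            rw [h2, ht, ← hv]
            exact (p.base_eq a (by rw [hst', ht]; simp)).symm
          · simp [auxF, h1, h2, ht]
        | some b =>
          obtain ⟨hv, hw, hr⟩ := ht
          have ht : ∃ t', t = b :: t' := by
            cases t with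
            | nil => exact absurd hr (hm.2.2 a b (by rw [hst']; simp))
            | cons c t' => exact ⟨t', by rw [hQ.unique_rel_pre a b c hr (hrel c t' rfl)]⟩
          obtain ⟨t', ht⟩ := ht
          refine ⟨(p, s.length + 1), ⟨hp, hn, ?_⟩, ?_⟩
          · show ((p.arrows.drop (s.length + 1)).head?).elim p.base Q.tgt = v
            rw [h2, ht]
            exact hw
          · simp [auxF, h1, h2, ht]
  exact Nat.card_congr hbij.equiv

end BQuiv

open BQuiv

/-- Let `(Q, I)` be a gentle bound quiver containing no full cycle
(equivalently, such that the gentle algebra `kQ/I` has finite global dimension).  Then: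
(a) every non-trivial forbidden path of `(Q, I)` is a subpath of exactly one forbidden
thread; (b) every vertex of `Q` is the center of exactly two split forbidden threads;
(c) for each vertex `i` of `Q` there is at most one almost-full cycle at `i`, and any
almost-full cycle has length at least `2`. -/
theorem stmt2 {V A : Type} [Fintype V] [Fintype A] (Q : BQuiv V A) (hQ : Q.IsGentle)
    (hfc : ¬ ∃ p : BQuiv.Path Q, IsFullCycle Q p) :
    (∀ l : List A, l ≠ [] → Q.PathChain l → l.Chain' (fun a b => Q.rel a b) →
      ∃! p : BQuiv.Path Q, IsForbThread Q p ∧ l <:+: p.arrows) ∧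
    (∀ v : V,
      Nat.card {x : BQuiv.Path Q × ℕ //
        IsForbThread Q x.1 ∧ x.2 ≤ x.1.arrows.length ∧ x.1.vertexAt x.2 = v} = 2) ∧
    (∀ i : V, ∀ p q : BQuiv.Path Q,
      IsAlmostFullCycleAt Q p i → IsAlmostFullCycleAt Q q i → p = q) ∧
    (∀ i : V, ∀ p : BQuiv.Path Q, IsAlmostFullCycleAt Q p i → 2 ≤ p.arrows.length) := by
  refine ⟨?_, aux_partB Q hQ hfc, aux_partC Q hQ hfc, ?_⟩
  · intro l hl _ hc
    obtain ⟨p, hp, hi⟩ := aux_partA Q hQ hfc l hl hc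
    refine ⟨p, ⟨hp, hi⟩, ?_⟩
    rintro q ⟨hq, s', t', hi'⟩
    obtain ⟨s, t, hi⟩ := hi
    cases l with
    | nil => exact absurd rfl hl
    | cons a l =>
      exact (aux_thread_uniq Q hQ q p hq hp a s' (l ++ t') s (l ++ t)
        (by rw [← hi']; simp) (by rw [← hi]; simp)).1
  · rintro i p ⟨h1, h2, h3, h4, -⟩
    rcases hl : p.arrows with _ | ⟨a, _ | ⟨b, l⟩⟩
    · exact absurd hl h2
    · exfalso
      apply aux_noloop Q hQ hfc a
      unfold Path.tgtV at h4
      rw [hl] at h4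
      exact (p.base_eq a (by rw [hl]; rfl)).trans h4.symm
    · simp
end

section
/- Let (Q,I) be a gentle bound quiver with associated marked ribbon graph (G,≤) = △(Q,I). Then the pairs of string functions of (Q,I) are in bijection with the directions of G, i.e., the functions σ : H(G) → {±1} satisfying σ(ιh) = −σ(h) for all half-edges h. In particular, (Q,I) admits exactly 2^{|Q0|} pairs of string functions. -/
set_option autoImplicit false

attribute [local instance] Classical.propDecidable

namespace BQuiv

variable {V A : Type}

/-- The type of permitted threads of `(Q, I)`: the vertices of the associated marked
ribbon graph `△(Q, I)`. -/
def PThread (Q : BQuiv V A) : Type := {p : Path Q // IsPermThread Q p}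

/-- The type of split permitted threads of `(Q, I)`: a permitted thread together with a
cut position.  These are the half-edges of the associated marked ribbon graph
`△(Q, I)`. -/
def PSplit (Q : BQuiv V A) : Type := {x : PThread Q × ℕ // x.2 ≤ x.1.1.arrows.length}

/-- The thread (vertex of `△(Q, I)`) over which a split permitted thread lies. -/
def PSplit.thread {Q : BQuiv V A} (x : PSplit Q) : PThread Q := x.1.1

/-- The cut position of a split permitted thread. -/
def PSplit.idx {Q : BQuiv V A} (x : PSplit Q) : ℕ := x.1.2

/-- The center of a split permitted thread `(η″, η′)`: the vertex `s(η″) = t(η′)`.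
The centers realize the bijection between the edges of `△(Q, I)` and the vertices
of `Q`. -/
def PSplit.center {Q : BQuiv V A} (x : PSplit Q) : V :=
  x.1.1.1.vertexAt x.1.2

end BQuiv

namespace BQuiv

variable {V A : Type}

/-- A pair of (Butler–Ringel) string functions for `(Q, I)`, with `Bool` standing for
`{±1}`. -/
def IsStringPair (Q : BQuiv V A) (S T : A → Bool) : Prop :=
  (∀ a b, a ≠ b → Q.src a = Q.src b → S a ≠ S b) ∧
  (∀ a b, a ≠ b → Q.tgt a = Q.tgt b → T a ≠ T b) ∧
  (∀ a b, Q.tgt a = Q.src b → (Q.rel b a ↔ T a = S b))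

end BQuiv

open BQuiv

namespace BQuiv

variable {V A : Type} {Q : BQuiv V A}

/-- Index form of being a maximal permitted list of arrows. -/
structure Thr (Q : BQuiv V A) (l : List A) : Prop where
  step : ∀ n a b, l[n]? = some a → l[n+1]? = some b → Q.src a = Q.tgt b ∧ ¬ Q.rel a b
  first : ∀ a b, l[0]? = some b → Q.src a = Q.tgt b → Q.rel a b
  last : ∀ n a c, l[n]? = some a → l[n+1]? = none → Q.src a = Q.tgt c → Q.rel a c

theorem thr_of_perm {p : Path Q} (h : IsPermThread Q p) : Thr Q p.arrows := by
  rcases h with ⟨h0, h1, h2, h3⟩ | ⟨h0, -⟩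
  · refine ⟨?_, ?_, ?_⟩
    · intro n a b ha hb
      have c1 := List.isChain_iff_getElem.1 p.chain
      have c2 := List.isChain_iff_getElem.1 h1
      obtain ⟨k1, e1⟩ := List.getElem?_eq_some_iff.1 ha
      obtain ⟨k2, e2⟩ := List.getElem?_eq_some_iff.1 hb
      have d1 := c1 n k2
      have d2 := c2 n k2
      rw [e1, e2] at d1 d2
      exact ⟨d1, d2⟩
    · intro a b hb
      exact h2 a b (by rw [List.head?_eq_getElem?]; exact hb)
    · intro n a c ha hn
      obtain ⟨k1, e1⟩ := List.getElem?_eq_some_iff.1 ha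
      have k2 := List.getElem?_eq_none_iff.1 hn
      refine h3 a c ?_
      rw [List.getLast?_eq_getElem?, ← ha]
      congr 1
      omega
  · rw [h0]
    exact ⟨by simp, by simp, by simp⟩

theorem Thr.unique_idx (hQ : Q.IsGentle) {l l' : List A} (h : Thr Q l) (h' : Thr Q l') :
    ∀ (n n' : ℕ) (a : A), l[n]? = some a → l'[n']? = some a → n = n' ∧ l[0]? = l'[0]? := by
  intro n
  induction n with
  | zero =>
    intro n' a ha ha'
    cases n' with
    | zero => exact ⟨rfl, ha.trans ha'.symm⟩
    | succ n' =>
      have hlt := (List.getElem?_eq_some_iff.1 ha').1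
      have hc : l'[n']? = some l'[n'] := List.getElem?_eq_getElem _
      obtain ⟨e1, e2⟩ := h'.step n' _ _ hc ha'
      exact absurd (h.first _ _ ha e1) e2
  | succ n ih =>
    intro n' a ha ha'
    have hlt := (List.getElem?_eq_some_iff.1 ha).1
    have hc : l[n]? = some l[n] := List.getElem?_eq_getElem _
    obtain ⟨e1, e2⟩ := h.step n _ _ hc ha
    cases n' with
    | zero => exact absurd (h'.first _ _ ha' e1) e2
    | succ n' =>
      have hlt' := (List.getElem?_eq_some_iff.1 ha').1
      have hc' : l'[n']? = some l'[n'] := List.getElem?_eq_getElem _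
      obtain ⟨e1', e2'⟩ := h'.step n' _ _ hc' ha'
      have := hQ.unique_nonrel_post a _ _ e1 e1' e2 e2'
      obtain ⟨u, w⟩ := ih n' _ hc (this ▸ hc')
      exact ⟨by omega, w⟩

theorem Thr.unique_next (hQ : Q.IsGentle) {l l' : List A} (h : Thr Q l) (h' : Thr Q l')
    (n : ℕ) (a : A) (ha : l[n]? = some a) (ha' : l'[n]? = some a) : l[n+1]? = l'[n+1]? := by
  rcases hb : l[n+1]? with _ | b <;> rcases hc : l'[n+1]? with _ | c
  · rfl
  · obtain ⟨e1, e2⟩ := h'.step _ _ _ ha' hc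
    exact absurd (h.last _ _ _ ha hb e1) e2
  · obtain ⟨e1, e2⟩ := h.step _ _ _ ha hb
    exact absurd (h'.last _ _ _ ha' hc e1) e2
  · obtain ⟨e1, e2⟩ := h'.step _ _ _ ha' hc
    obtain ⟨e3, e4⟩ := h.step _ _ _ ha hb
    rw [hQ.unique_nonrel_pre a _ _ e3 e1 e4 e2]

theorem Thr.unique (hQ : Q.IsGentle) {l l' : List A} (h : Thr Q l) (h' : Thr Q l')
    (n n' : ℕ) (a : A) (ha : l[n]? = some a) (ha' : l'[n']? = some a) : n = n' ∧ l = l' := by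
  obtain ⟨e, e0⟩ := h.unique_idx hQ h' n n' a ha ha'
  refine ⟨e, List.ext_getElem? fun k => ?_⟩
  induction k with
  | zero => exact e0
  | succ k ih =>
    rcases hb : l[k]? with _ | b
    · have h1 := List.getElem?_eq_none_iff.1 hb
      have h2 := List.getElem?_eq_none_iff.1 (ih.symm.trans hb)
      rw [List.getElem?_eq_none (by omega), List.getElem?_eq_none (by omega)]
    · exact h.unique_next hQ h' k b hb (ih ▸ hb)

theorem path_ext {p q : Path Q} (h : p.arrows = q.arrows) (h0 : p.arrows ≠ []) : p = q := by
  have e : p.base = q.base := by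
    have h1 := p.base_eq _ (List.getLast?_eq_some_getLast h0)
    have h2 := q.base_eq (p.arrows.getLast h0) (by
      rw [← h]; exact List.getLast?_eq_some_getLast h0)
    rw [← h1, h2]
  cases p; cases q; simp_all

theorem exists_thread (hQ : Q.IsGentle) (a : A) :
    ∃ p : Path Q, IsPermThread Q p ∧ a ∈ p.arrows := by
  obtain ⟨m, hm, hadm⟩ := hQ.admissible
  let r : A → A → Prop := fun a b => Q.src a = Q.tgt b ∧ ¬ Q.rel a b
  have hbound : ∀ l : List A, l.IsChain r → l.length < m := by
    intro l hl
    by_contra hlt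
    have ht := hl.take m
    exact hadm (l.take m) (by simp; omega) (ht.imp fun _ _ h => h.1) (ht.imp fun _ _ h => h.2)
  let P : ℕ → Prop := fun n => ∃ l : List A, l.IsChain r ∧ a ∈ l ∧ l.length = n
  have hP1 : P 1 := ⟨[a], by simp, by simp, rfl⟩
  obtain ⟨l, hl, hal, hlen⟩ : P (Nat.findGreatest P m) :=
    Nat.findGreatest_spec (P := P) (m := 1) (by omega) hP1
  have hmax : ∀ l' : List A, l'.IsChain r → a ∈ l' → l'.length ≤ l.length := by
    intro l' h1 h2
    rw [hlen]
    exact Nat.le_findGreatest (hbound l' h1).le ⟨l', h1, h2, rfl⟩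
  have hne : l ≠ [] := List.ne_nil_of_mem hal
  refine ⟨⟨Q.src (l.getLast hne), l, hl.imp fun _ _ h => h.1, ?_⟩, Or.inl ⟨hne,
    hl.imp fun _ _ h => h.2, ?_, ?_⟩, hal⟩
  · intro b hb
    rw [List.getLast?_eq_some_getLast hne] at hb
    cases hb; rfl
  · intro c b hb hc
    by_contra hr
    have := hmax (c :: l) (List.isChain_cons.2 ⟨fun y hy => by
      have : b = y := Option.some.inj (hb.symm.trans hy)
      subst this; exact ⟨hc, hr⟩, hl⟩) (by simp [hal])
    simp at this
  · intro b c hb hc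
    by_contra hr
    have := hmax (l ++ [c]) (List.isChain_append.2 ⟨hl, by simp, fun x hx y hy => by
      have h1 : b = x := Option.some.inj (hb.symm.trans hx)
      have h2 : c = y := by simpa using hy
      subst h1; subst h2; exact ⟨hc, hr⟩⟩) (by simp [hal])
    simp at this

/-- The arrows of the thread of a split. -/
def PSplit.arr (z : PSplit Q) : List A := z.1.1.1.arrows

theorem PSplit.thr (z : PSplit Q) : Thr Q z.arr := thr_of_perm z.1.1.2

/-- Incidence of a half-arrow (`inl a`: start of `a`; `inr b`: end of `b`) with a split. -/
def Inc (z : PSplit Q) : A ⊕ A → Prop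
  | .inl a => ∃ n, z.idx = n + 1 ∧ z.arr[n]? = some a
  | .inr b => z.arr[z.idx]? = some b

/-- The vertex of a half-arrow. -/
def vt (Q : BQuiv V A) : A ⊕ A → V := Sum.elim Q.src Q.tgt

theorem split_ext {z w : PSplit Q} (h : z.arr = w.arr) (h0 : z.arr ≠ []) (hi : z.idx = w.idx) :
    z = w := by
  obtain ⟨⟨⟨p, hp⟩, n⟩, hn⟩ := z
  obtain ⟨⟨⟨q, hq⟩, k⟩, hk⟩ := w
  have := path_ext (p := p) (q := q) h h0
  subst this
  have : n = k := hi
  subst this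
  rfl

theorem Inc.unique (hQ : Q.IsGentle) {z w : PSplit Q} {g : A ⊕ A} (hz : Inc z g)
    (hw : Inc w g) : z = w := by
  rcases g with a | b
  · obtain ⟨n, h1, h2⟩ := hz
    obtain ⟨k, h3, h4⟩ := hw
    obtain ⟨e, e'⟩ := z.thr.unique hQ w.thr _ _ _ h2 h4
    exact split_ext e' (by rintro h; simp [h] at h2) (by omega)
  · obtain ⟨e, e'⟩ := z.thr.unique hQ w.thr _ _ _ hz hw
    exact split_ext e' (by rintro h; simp [Inc, h] at hz) e

theorem Inc.exists (hQ : Q.IsGentle) (g : A ⊕ A) : ∃ z : PSplit Q, Inc z g := by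
  rcases g with a | a
  · obtain ⟨p, hp, ha⟩ := exists_thread hQ a
    obtain ⟨n, hn⟩ := List.mem_iff_getElem?.1 ha
    exact ⟨⟨⟨⟨p, hp⟩, n + 1⟩, (List.getElem?_eq_some_iff.1 hn).1⟩, n, rfl, hn⟩
  · obtain ⟨p, hp, ha⟩ := exists_thread hQ a
    obtain ⟨n, hn⟩ := List.mem_iff_getElem?.1 ha
    exact ⟨⟨⟨⟨p, hp⟩, n⟩, (List.getElem?_eq_some_iff.1 hn).1.le⟩, hn⟩

theorem Inc.center {z : PSplit Q} {g : A ⊕ A} (h : Inc z g) : z.center = vt Q g := by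
  have hc : z.center = (z.arr[z.idx]?).elim z.1.1.1.base Q.tgt := by
    unfold PSplit.center Path.vertexAt
    rw [List.head?_drop]
    rfl
  rw [hc]
  rcases g with a | b
  · obtain ⟨n, h1, h2⟩ := h
    rw [h1]
    rcases hb : z.arr[n+1]? with _ | b
    · refine (z.1.1.1.base_eq a ?_).symm
      have k1 := (List.getElem?_eq_some_iff.1 h2).1
      have k2 := List.getElem?_eq_none_iff.1 hb
      have : z.arr.getLast? = some a := by
        rw [List.getLast?_eq_getElem?, ← h2]
        congr 1
        omega
      exact this
    · exact (z.thr.step _ _ _ h2 hb).1.symm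
  · have : z.arr[z.idx]? = some b := h
    rw [this]; rfl

theorem exists_inc {z : PSplit Q} (h : z.arr ≠ []) : ∃ g, Inc z g := by
  have hle : z.idx ≤ z.arr.length := z.2
  rcases hi : z.idx with _ | n
  · refine ⟨.inr (z.arr.head h), ?_⟩
    change z.arr[z.idx]? = _
    rw [hi, ← List.head?_eq_getElem?, List.head?_eq_some_head h]
  · rw [hi] at hle
    exact ⟨.inl (z.arr[n]), n, hi, List.getElem?_eq_getElem _⟩

/-- Two half-arrows lie on the same split. -/
def Comp (Q : BQuiv V A) : A ⊕ A → A ⊕ A → Prop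
  | .inl a, .inl b => a = b
  | .inr a, .inr b => a = b
  | .inl a, .inr b => ¬ Q.rel a b
  | .inr b, .inl a => ¬ Q.rel a b

theorem inc_mix (hQ : Q.IsGentle) {z w : PSplit Q} {a b : A} (hz : Inc z (.inl a))
    (hw : Inc w (.inr b)) (hv : Q.src a = Q.tgt b) : z = w ↔ ¬ Q.rel a b := by
  constructor
  · rintro rfl
    obtain ⟨n, h1, h2⟩ := hz
    have h3 : z.arr[z.idx]? = some b := hw
    rw [h1] at h3
    exact (z.thr.step _ _ _ h2 h3).2
  · intro hr
    refine Inc.unique hQ hz ?_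
    have h3 : w.arr[w.idx]? = some b := hw
    rcases hi : w.idx with _ | n
    · rw [hi] at h3
      exact absurd (w.thr.first _ _ h3 hv) hr
    · rw [hi] at h3
      have hlt := (List.getElem?_eq_some_iff.1 h3).1
      have hc : w.arr[n]? = some w.arr[n] := List.getElem?_eq_getElem _
      obtain ⟨e1, e2⟩ := w.thr.step _ _ _ hc h3
      have := hQ.unique_nonrel_post b _ _ hv e1 hr e2
      exact ⟨n, hi, this ▸ hc⟩

theorem inc_comp (hQ : Q.IsGentle) {z w : PSplit Q} {g h : A ⊕ A} (hz : Inc z g)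
    (hw : Inc w h) (hv : vt Q g = vt Q h) : z = w ↔ Comp Q g h := by
  rcases g with a | a <;> rcases h with b | b
  · constructor
    · rintro rfl
      obtain ⟨n, h1, h2⟩ := hz
      obtain ⟨k, h3, h4⟩ := hw
      have : n = k := by omega
      subst this
      exact Option.some.inj (h2.symm.trans h4)
    · intro e
      have e : a = b := e
      subst e
      exact hz.unique hQ hw
  · exact inc_mix hQ hz hw hv
  · rw [eq_comm]
    exact inc_mix hQ hw hz hv.symm
  · constructor
    · rintro rfl
      exact Option.some.inj (Eq.trans (Eq.symm hz) hw)
    · intro e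
      have e : a = b := e
      subst e
      exact hz.unique hQ hw

theorem three_card {X : Type} [Finite X] {P : X → Prop} (h : Nat.card {x // P x} ≤ 2) {a b c : X}
    (ha : P a) (hb : P b) (hc : P c) (h1 : a ≠ b) (h2 : a ≠ c) (h3 : b ≠ c) : False := by
  have := Fintype.ofFinite X
  rw [Nat.card_eq_fintype_card] at h
  have : 2 < Fintype.card {x // P x} := by
    rw [Fintype.two_lt_card_iff]
    exact ⟨⟨a, ha⟩, ⟨b, hb⟩, ⟨c, hc⟩, by simpa, by simpa, by simpa⟩
  omega

theorem one_card {X : Type} [Finite X] {P : X → Prop} (h : Nat.card {x // P x} ≤ 1) {a b : X}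
    (ha : P a) (hb : P b) : a = b := by
  have := Finite.card_le_one_iff_subsingleton.1 h
  exact congrArg Subtype.val (Subsingleton.elim (⟨a, ha⟩ : {x // P x}) ⟨b, hb⟩)

theorem pos_card {X : Type} [Finite X] {P : X → Prop} {a : X}
    (ha : P a) : 0 < Nat.card {x // P x} := by
  have : Nonempty {x // P x} := ⟨⟨a, ha⟩⟩
  exact Nat.card_pos

theorem card_one {X : Type} [Finite X] {P : X → Prop} {a : X}
    (ha : P a) (h : ∀ b, P b → b = a) : Nat.card {x // P x} = 1 := by
  rw [Nat.card_eq_one_iff_exists]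
  exact ⟨⟨a, ha⟩, fun b => Subtype.ext (h b.1 b.2)⟩

theorem card_zero {X : Type} {P : X → Prop} (h : ∀ b, ¬ P b) : Nat.card {x // P x} = 0 := by
  have : IsEmpty {x // P x} := ⟨fun b => h b.1 b.2⟩
  exact Nat.card_of_isEmpty

theorem no_three_germs [Finite A] (hQ : Q.IsGentle) {f g h : A ⊕ A} (h1 : vt Q f = vt Q g)
    (h2 : vt Q f = vt Q h) (c1 : ¬ Comp Q f g) (c2 : ¬ Comp Q f h) (c3 : ¬ Comp Q g h) : False := by
  rcases f with a | a <;> rcases g with b | b <;> rcases h with c | c <;>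
    simp only [Comp, not_not, vt, Sum.elim_inl, Sum.elim_inr] at *
  · exact three_card (P := fun x => Q.src x = Q.src a) (hQ.out_le _) rfl h1.symm h2.symm c1 c2 c3
  · exact c1 (hQ.unique_rel_post _ _ _ c2 c3)
  · exact c2 (hQ.unique_rel_post _ _ _ c1 c3)
  · exact c3 (hQ.unique_rel_pre _ _ _ c1 c2)
  · exact c3 (hQ.unique_rel_post _ _ _ c1 c2)
  · exact c2 (hQ.unique_rel_pre _ _ _ c1 c3)
  · exact c1 (hQ.unique_rel_pre _ _ _ c2 c3)
  · exact three_card (P := fun x => Q.tgt x = Q.tgt a) (hQ.in_le _) rfl h1.symm h2.symm c1 c2 c3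

theorem trivial_comp [Finite A] {z : PSplit Q} (hz : z.arr = []) {g h : A ⊕ A}
    (h1 : vt Q g = z.center) (h2 : vt Q h = z.center) : Comp Q g h := by
  have hb : z.center = z.1.1.1.base := by
    unfold PSplit.center Path.vertexAt
    rw [show z.1.1.1.arrows = [] from hz]
    simp
  have hp := z.1.1.2
  rcases hp with ⟨h0, -⟩ | ⟨-, hd⟩
  · exact absurd hz h0
  rw [← hb] at hd
  generalize z.center = v at *
  unfold deg at hd
  rcases g with a | a <;> rcases h with b | b <;>
    simp only [Comp, vt, Sum.elim_inl, Sum.elim_inr] at *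
  · refine one_card (P := fun x => Q.src x = v) ?_ h1 h2
    rcases hd with hd | ⟨hd, α, β, e1, e2, -⟩
    · omega
    · have := pos_card (P := fun x => Q.tgt x = v) e2
      omega
  · have p1 := pos_card (P := fun x => Q.src x = v) h1
    have p2 := pos_card (P := fun x => Q.tgt x = v) h2
    rcases hd with hd | ⟨hd, α, β, e1, e2, e3⟩
    · omega
    · rwa [one_card (P := fun x => Q.src x = v) (by omega) h1 e1,
        one_card (P := fun x => Q.tgt x = v) (by omega) h2 e2]
  · have p1 := pos_card (P := fun x => Q.src x = v) h2
    have p2 := pos_card (P := fun x => Q.tgt x = v) h1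
    rcases hd with hd | ⟨hd, α, β, e1, e2, e3⟩
    · omega
    · rwa [one_card (P := fun x => Q.src x = v) (by omega) h2 e1,
        one_card (P := fun x => Q.tgt x = v) (by omega) h1 e2]
  · refine one_card (P := fun x => Q.tgt x = v) ?_ h1 h2
    rcases hd with hd | ⟨hd, α, β, e1, e2, -⟩
    · omega
    · have := pos_card (P := fun x => Q.src x = v) e1
      omega

theorem trivial_unique {z w : PSplit Q} (hz : z.arr = []) (hw : w.arr = [])
    (h : z.center = w.center) : z = w := by
  obtain ⟨⟨⟨p, hp⟩, n⟩, hn⟩ := z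
  obtain ⟨⟨⟨q, hq⟩, k⟩, hk⟩ := w
  cases p with | mk pb pa p1 p2 =>
  cases q with | mk qb qa q1 q2 =>
  simp only [PSplit.arr] at hz hw
  subst hz
  subst hw
  have hn' : n = 0 := by simpa using hn
  have hk' : k = 0 := by simpa using hk
  subst hn'
  subst hk'
  have : pb = qb := by simpa [PSplit.center, Path.vertexAt] using h
  subst this
  rfl

theorem no_three [Finite A] (hQ : Q.IsGentle) {x y z : PSplit Q} (h1 : x.center = y.center)
    (h2 : x.center = z.center) (n1 : x ≠ y) (n2 : x ≠ z) (n3 : y ≠ z) : False := by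
  have key : ∀ {u v w : PSplit Q}, u.center = v.center → u.center = w.center → v ≠ w → v.arr ≠ [] →
      w.arr ≠ [] → u.arr ≠ [] := by
    intro u v w e1 e2 hvw hv hw hu
    obtain ⟨g, hg⟩ := exists_inc hv
    obtain ⟨h, hh⟩ := exists_inc hw
    refine hvw ((inc_comp hQ hg hh ?_).2 (trivial_comp hu ?_ ?_))
    · rw [← hg.center, ← hh.center, ← e1, e2]
    · rw [← hg.center, e1]
    · rw [← hh.center, e2]
  by_cases hx : x.arr = [] <;> by_cases hy : y.arr = [] <;> by_cases hz : z.arr = []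
  · exact n1 (trivial_unique hx hy h1)
  · exact n1 (trivial_unique hx hy h1)
  · exact n2 (trivial_unique hx hz h2)
  · exact key h1 h2 n3 hy hz hx
  · exact n3 (trivial_unique hy hz (h1.symm.trans h2))
  · exact key h1.symm (h1.symm.trans h2) n2 hx hz hy
  · exact key h2.symm (h2.symm.trans h1) n1 hx hy hz
  · obtain ⟨f, hf⟩ := exists_inc hx
    obtain ⟨g, hg⟩ := exists_inc hy
    obtain ⟨h, hh⟩ := exists_inc hz
    have e1 : vt Q f = vt Q g := by rw [← hf.center, ← hg.center, h1]
    have e2 : vt Q f = vt Q h := by rw [← hf.center, ← hh.center, h2]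
    exact no_three_germs hQ e1 e2 (fun c => n1 ((inc_comp hQ hf hg e1).2 c))
      (fun c => n2 ((inc_comp hQ hf hh e2).2 c))
      (fun c => n3 ((inc_comp hQ hg hh (e1.symm.trans e2)).2 c))

theorem exists_other [Finite A] (hQ : Q.IsGentle) {x : PSplit Q} {g : A ⊕ A} (hx : Inc x g) :
    ∃ y : PSplit Q, y ≠ x ∧ y.center = vt Q g := by
  by_cases hall : ∃ h, vt Q h = vt Q g ∧ ¬ Comp Q g h
  · obtain ⟨h, e, hc⟩ := hall
    obtain ⟨y, hy⟩ := Inc.exists hQ h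
    refine ⟨y, fun e' => hc ((inc_comp hQ hx hy e.symm).1 e'.symm), ?_⟩
    rw [hy.center, e]
  · push Not at hall
    let p : Path Q := ⟨vt Q g, [], List.isChain_nil, by simp⟩
    have hp : IsPermThread Q p := by
      refine Or.inr ⟨rfl, ?_⟩
      unfold deg
      rcases g with a | a
      · change Nat.card {x // Q.src x = Q.src a} + Nat.card {x // Q.tgt x = Q.src a} = 1 ∨
          (Nat.card {x // Q.src x = Q.src a} + Nat.card {x // Q.tgt x = Q.src a} = 2 ∧
            ∃ α β, Q.src α = Q.src a ∧ Q.tgt β = Q.src a ∧ ¬ Q.rel α β)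
        have c1 := card_one (P := fun x => Q.src x = Q.src a) rfl
          (fun b hb => (hall (.inl b) hb).symm)
        by_cases hin : ∃ b, Q.tgt b = Q.src a
        · obtain ⟨b, hb⟩ := hin
          have hr : ¬ Q.rel a b := hall (.inr b) hb
          have c2 := card_one (P := fun x => Q.tgt x = Q.src a) hb (fun c hc =>
            hQ.unique_nonrel_pre a c b hc.symm hb.symm (hall (.inr c) hc) hr)
          exact Or.inr ⟨by omega, a, b, rfl, hb, hr⟩
        · push Not at hin
          have c2 := card_zero (P := fun x => Q.tgt x = Q.src a) hin
          exact Or.inl (by omega)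
      · change Nat.card {x // Q.src x = Q.tgt a} + Nat.card {x // Q.tgt x = Q.tgt a} = 1 ∨
          (Nat.card {x // Q.src x = Q.tgt a} + Nat.card {x // Q.tgt x = Q.tgt a} = 2 ∧
            ∃ α β, Q.src α = Q.tgt a ∧ Q.tgt β = Q.tgt a ∧ ¬ Q.rel α β)
        have c1 := card_one (P := fun x => Q.tgt x = Q.tgt a) rfl
          (fun b hb => (hall (.inr b) hb).symm)
        by_cases hin : ∃ b, Q.src b = Q.tgt a
        · obtain ⟨b, hb⟩ := hin
          have hr : ¬ Q.rel b a := hall (.inl b) hb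
          have c2 := card_one (P := fun x => Q.src x = Q.tgt a) hb (fun c hc =>
            hQ.unique_nonrel_post a c b hc hb (hall (.inl c) hc) hr)
          exact Or.inr ⟨by omega, b, a, hb, rfl, hr⟩
        · push Not at hin
          have c2 := card_zero (P := fun x => Q.src x = Q.tgt a) hin
          exact Or.inl (by omega)
    refine ⟨⟨⟨⟨p, hp⟩, 0⟩, Nat.zero_le _⟩, ?_, rfl⟩
    rintro rfl
    rcases g with a | a
    · obtain ⟨n, h1, -⟩ := hx
      exact absurd h1 (Nat.succ_ne_zero n).symm
    · have : ([] : List A)[0]? = some a := hx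
      simp at this

theorem exists_germ (hQ : Q.IsGentle) (v : V) : ∃ g, vt Q g = v := by
  obtain ⟨a⟩ := hQ.has_arrow
  rcases Relation.ReflTransGen.cases_head (hQ.connected v (Q.src a)) with h | ⟨c, ⟨b, hb⟩, -⟩
  · exact ⟨.inl a, h.symm⟩
  · rcases hb with hb | hb
    · exact ⟨.inl b, hb.1⟩
    · exact ⟨.inr b, hb.2⟩

/-- The sign of a half-arrow given by a pair of string functions. -/
def sgn (S T : A → Bool) : A ⊕ A → Bool := Sum.elim S (fun b => !T b)

theorem stringPair_iff (S T : A → Bool) : IsStringPair Q S T ↔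
    ∀ g h, vt Q g = vt Q h → (sgn S T g = sgn S T h ↔ Comp Q g h) := by
  constructor
  · rintro ⟨h1, h2, h3⟩ (a | a) (b | b) hv <;>
      simp only [vt, sgn, Comp, Sum.elim_inl, Sum.elim_inr] at *
    · exact ⟨fun e => by_contra fun hn => h1 a b hn hv e, fun e => by rw [e]⟩
    · rw [h3 b a hv.symm]
      cases S a <;> cases T b <;> simp
    · rw [h3 a b hv]
      cases S b <;> cases T a <;> simp
    · exact ⟨fun e => by_contra fun hn => h2 a b hn hv (by simpa using e), fun e => by rw [e]⟩
  · intro H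
    refine ⟨fun a b hn hv e => ?_, fun a b hn hv e => ?_, fun a b hv => ?_⟩
    · exact hn ((H (.inl a) (.inl b) hv).1 e)
    · exact hn ((H (.inr a) (.inr b) hv).1 (by simp [sgn, e]))
    · have := H (.inr a) (.inl b) hv
      simp only [sgn, Comp, Sum.elim_inl, Sum.elim_inr] at this
      rw [← not_iff_not, ← this]
      cases S b <;> cases T a <;> simp

end BQuiv

/-- Let `(Q, I)` be a gentle bound quiver with associated marked
ribbon graph `(G, ≤) = △(Q, I)`.  Then the pairs of string functions of `(Q, I)` are in
bijection with the directions of `G`, i.e. the functions `σ : H(G) → {±1}` with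
`σ(ιh) = -σ(h)` for all half-edges `h`.  (The half-edges of `G` are the split permitted
threads, and `ι` exchanges the two split permitted threads with a common center, so a
direction is a function assigning opposite signs to distinct split permitted threads
with the same center.)  In particular, `(Q, I)` admits exactly `2 ^ |Q₀|` pairs of
string functions. -/
theorem stmt3 {V A : Type} [Fintype V] [Fintype A] (Q : BQuiv V A) (hQ : Q.IsGentle) :
    Nonempty ({ST : (A → Bool) × (A → Bool) // IsStringPair Q ST.1 ST.2} ≃
      {σ : PSplit Q → Bool //
        ∀ x y : PSplit Q, x ≠ y → x.center = y.center → σ x = !σ y}) ∧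
    Nat.card {ST : (A → Bool) × (A → Bool) // IsStringPair Q ST.1 ST.2} =
      2 ^ Fintype.card V := by
  choose x hx using fun g => Inc.exists (Q := Q) hQ g
  choose g hg using fun v => exists_germ (Q := Q) hQ v
  choose y hy hyc using fun v => exists_other (Q := Q) hQ (hx (g v))
  have hxc : ∀ h, (x h).center = vt Q h := fun h => (hx h).center
  have hycv : ∀ v, (y v).center = v := fun v => (hyc v).trans (hg v)
  have hxcv : ∀ v, (x (g v)).center = v := fun v => (hxc _).trans (hg v)
  -- the fibre over a vertex consists of exactly two splits
  have htwo : ∀ z : PSplit Q, z = x (g z.center) ∨ z = y z.center := by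
    intro z
    by_contra hn
    push Not at hn
    exact no_three hQ (hxcv z.center).symm (hycv z.center).symm hn.1 hn.2 (hy _).symm
  let D := {σ : PSplit Q → Bool // ∀ x y : PSplit Q, x ≠ y → x.center = y.center → σ x = !σ y}
  have hD : ∀ (σ : D) (z w : PSplit Q), z.center = w.center → (σ.1 z = σ.1 w ↔ z = w) := by
    intro σ z w hc
    refine ⟨fun e => by_contra fun hn => ?_, fun e => by rw [e]⟩
    have := σ.2 z w hn hc
    rw [e] at this
    cases h : σ.1 w <;> simp [h] at this
  -- directions are functions on vertices
  let toD : (V → Bool) → D := fun f =>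
    ⟨fun z => if z = x (g z.center) then f z.center else !f z.center, by
      intro z w hn hc
      simp only
      rcases htwo z with h1 | h1 <;> rcases htwo w with h2 | h2
      · exact absurd (by rw [h1, h2, hc]) hn
      · have h3 : w ≠ x (g w.center) := by
          intro h; exact hy w.center (h2.symm.trans h)
        rw [if_pos h1, if_neg h3, hc]; simp
      · have h3 : z ≠ x (g z.center) := by
          intro h; exact hy z.center (h1.symm.trans h)
        rw [if_neg h3, if_pos h2, hc]
      · exact absurd (by rw [h1, h2, hc]) hn⟩
  have toD_x : ∀ f v, (toD f).1 (x (g v)) = f v := by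
    intro f v
    simp only [toD]
    rw [hxcv, if_pos rfl]
  have D_ext : ∀ σ τ : D, (∀ v, σ.1 (x (g v)) = τ.1 (x (g v))) → σ = τ := by
    intro σ τ h
    refine Subtype.ext (funext fun z => ?_)
    rcases htwo z with e | e
    · rw [e]; exact h _
    · rw [e, σ.2 _ _ (hy z.center) ((hycv _).trans (hxcv _).symm),
        τ.2 _ _ (hy z.center) ((hycv _).trans (hxcv _).symm), h]
  let eD : (V → Bool) ≃ D :=
    { toFun := toD
      invFun := fun σ v => σ.1 (x (g v))
      left_inv := fun f => funext fun v => toD_x f v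
      right_inv := fun σ => D_ext _ _ fun v => toD_x (fun v => σ.1 (x (g v))) v }
  -- directions are pairs of string functions
  let F : D → {ST : (A → Bool) × (A → Bool) // IsStringPair Q ST.1 ST.2} := fun σ =>
    ⟨(fun a => σ.1 (x (.inl a)), fun b => !σ.1 (x (.inr b))), by
      rw [stringPair_iff]
      intro h k hv
      have hs : ∀ h, sgn (fun a => σ.1 (x (.inl a))) (fun b => !σ.1 (x (.inr b))) h
          = σ.1 (x h) := by
        rintro (a | b) <;> simp [sgn]
      rw [hs, hs, hD σ _ _ (by rw [hxc, hxc, hv]), inc_comp hQ (hx h) (hx k) hv]⟩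
  have hF : Function.Bijective F := by
    constructor
    · intro σ τ h
      have h1 : ∀ a, σ.1 (x (.inl a)) = τ.1 (x (.inl a)) := fun a =>
        congrFun (congrArg (fun s => s.1.1) h) a
      have h2 : ∀ a, (!σ.1 (x (.inr a))) = !τ.1 (x (.inr a)) := fun a =>
        congrFun (congrArg (fun s => s.1.2) h) a
      refine D_ext _ _ fun v => ?_
      rcases g v with a | a
      · exact h1 a
      · simpa using h2 a
    · rintro ⟨⟨S, T⟩, hST⟩
      have hST' := (stringPair_iff S T).1 hST
      let σ : D := toD fun v => sgn S T (g v)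
      have key : ∀ h, σ.1 (x h) = sgn S T h := by
        intro h
        have e0 : σ.1 (x (g (vt Q h))) = sgn S T (g (vt Q h)) :=
          toD_x (fun v => sgn S T (g v)) _
        have i1 := hD σ (x h) (x (g (vt Q h))) (by rw [hxc, hxcv])
        have i2 := inc_comp hQ (hx h) (hx (g (vt Q h))) (hg _).symm
        have i3 := hST' h (g (vt Q h)) (hg _).symm
        have i4 := i1.trans (i2.trans i3.symm)
        rw [e0] at i4
        revert i4
        cases σ.1 (x h) <;> cases sgn S T h <;> cases sgn S T (g (vt Q h)) <;> simp
      refine ⟨σ, Subtype.ext (Prod.ext (funext fun a => ?_) (funext fun a => ?_))⟩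
      · exact key (.inl a)
      · change (!σ.1 (x (.inr a))) = T a
        rw [key]; simp [sgn]
  let eF := Equiv.ofBijective F hF
  refine ⟨⟨eF.symm⟩, ?_⟩
  rw [← Nat.card_congr (eD.trans eF), Nat.card_eq_fintype_card]
  simp
end

section
/- Let (G,≤) be a marked ribbon graph. Then the bound quiver ∇(G,≤) is a gentle bound quiver. Moreover, for each vertex α of G with chain of half-edges h^α_0 > h^α_1 > ⋯ > h^α_{ℓ^α}, the path η^α := (h^α_0,h^α_1)(h^α_1,h^α_2)⋯(h^α_{ℓ^α−1},h^α_{ℓ^α}) of ∇(G,≤) (taken to be the trivial path at the edge {h^α_0, ιh^α_0} when ℓ^α = 0) is a permitted thread of ∇(G,≤), and every permitted thread of ∇(G,≤) equals η^α for some vertex α of G. -/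
set_option autoImplicit false

attribute [local instance] Classical.propDecidable

/-- A marked ribbon graph `(G, ≤)`: a finite graph given by half-edges (a set `H` of
half-edges with an incidence map `z : H → V` and a fixed-point-free involution `ι`
whose orbits are the edges), together with a partial order `≤` on `H` in which two
half-edges are comparable exactly when they are incident to the same vertex; the graph
is required to be connected, without isolated vertices (`z` surjective) and with a
vertex of degree at least two. -/
structure MRG (V H : Type) where
  z : H → V
  invh : H → H
  inv_inv : ∀ h, invh (invh h) = h
  inv_ne : ∀ h, invh h ≠ h
  z_surj : Function.Surjective z
  le : H → H → Prop
  le_refl : ∀ h, le h h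
  le_trans : ∀ {a b c}, le a b → le b c → le a c
  le_antisymm : ∀ {a b}, le a b → le b a → a = b
  comp_iff : ∀ a b, (le a b ∨ le b a) ↔ z a = z b
  connected : ∀ u v : V,
    Relation.ReflTransGen (fun x y => ∃ h, z h = x ∧ z (invh h) = y) u v
  thick : ∃ h h' : H, h ≠ h' ∧ z h = z h'

namespace MRG

variable {V H : Type}

/-- The type of edges of the graph: orbits of the involution. -/
def E (G : MRG V H) : Type := Quot (fun a b : H => b = G.invh a)

/-- The edge containing a given half-edge. -/
def edge (G : MRG V H) (h : H) : G.E := Quot.mk _ h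

/-- The strict order on half-edges. -/
def lt (G : MRG V H) (a b : H) : Prop := G.le a b ∧ a ≠ b

/-- `b` covers `a`: `a` is a direct predecessor of `b` (equivalently `b` is the direct
successor of `a`) with respect to `≤`. -/
def Cov (G : MRG V H) (a b : H) : Prop :=
  G.lt a b ∧ ∀ c, G.lt a c → G.lt c b → False

end MRG

namespace MRG

variable {V H : Type}

/-- The type of arrows of the bound quiver `∇(G, ≤)`: pairs `(h′, h)` of half-edges
with `h` the direct predecessor of `h′` with respect to `≤`. -/
def NArrow (G : MRG V H) : Type := {p : H × H // G.Cov p.2 p.1}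

/-- The bound quiver `∇(G, ≤)` of a marked ribbon graph: its vertices are the edges of
`G`, its arrows the pairs `(h′, h)` with `h` the direct predecessor of `h′`, with
source `{h, ιh}` and target `{h′, ιh′}`, and its relations all length-two paths
`(h′₂, h₂)(h′₁, h₁)` with `h′₁ = ι h₂`. -/
def nabla (G : MRG V H) : BQuiv G.E G.NArrow where
  src p := G.edge p.1.2
  tgt p := G.edge p.1.1
  rel a b := b.1.1 = G.invh a.1.2

end MRG

namespace MRG

variable {V H : Type}

/-- `p` is the path `η^α` of `∇(G, ≤)` associated with the vertex `α` of `G`: if the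
half-edges at `α` form the chain `h^α_0 > h^α_1 > ⋯ > h^α_{ℓ^α}`, then `η^α` is the
path `(h^α_0, h^α_1)(h^α_1, h^α_2)⋯(h^α_{ℓ^α - 1}, h^α_{ℓ^α})` — i.e. the path without
repeated arrows consisting of all arrows of `∇(G, ≤)` lying over `α`, consecutive
arrows sharing a half-edge — taken to be the trivial path at the edge
`{h^α_0, ι h^α_0}` when `ℓ^α = 0`. -/
def IsEtaOf (G : MRG V H) (α : V) (p : BQuiv.Path G.nabla) : Prop :=
  (∀ a : G.NArrow, a ∈ p.arrows ↔ G.z a.1.1 = α) ∧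
  p.arrows.Chain' (fun a b => a.1.2 = b.1.1) ∧
  p.arrows.Nodup ∧
  (p.arrows = [] → ∃ h, G.z h = α ∧ p.base = G.edge h)

end MRG

open MRG BQuiv

namespace MRG

variable {V H : Type}

/-- The partial order of a marked ribbon graph. -/
def po (G : MRG V H) : PartialOrder H where
  le := G.le
  le_refl := G.le_refl
  le_trans := fun _ _ _ => G.le_trans
  le_antisymm := fun _ _ => G.le_antisymm

theorem lt_iff (G : MRG V H) (a b : H) : G.lt a b ↔ @LT.lt H G.po.toLT a b := by
  letI := G.po
  exact (_root_.lt_iff_le_and_ne (a := a) (b := b)).symm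

theorem cov_iff (G : MRG V H) (a b : H) : G.Cov a b ↔ @CovBy H G.po.toLT a b := by
  letI := G.po
  unfold Cov CovBy
  simp only [lt_iff]

theorem z_eq_of_le (G : MRG V H) {a b : H} (h : G.le a b) : G.z a = G.z b :=
  (G.comp_iff a b).1 (Or.inl h)

theorem z_eq_of_cov (G : MRG V H) {a b : H} (h : G.Cov a b) : G.z a = G.z b :=
  G.z_eq_of_le h.1.1

/-- trichotomy on comparable elements -/
theorem tri (G : MRG V H) {a b : H} (h : G.z a = G.z b) : G.lt a b ∨ a = b ∨ G.lt b a := by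
  by_cases e : a = b
  · exact Or.inr (Or.inl e)
  · rcases (G.comp_iff a b).2 h with k | k
    · exact Or.inl ⟨k, e⟩
    · exact Or.inr (Or.inr ⟨k, fun x => e x.symm⟩)

theorem lt_irrefl' (G : MRG V H) {a : H} (h : G.lt a a) : False := h.2 rfl

theorem lt_trans' (G : MRG V H) {a b c : H} (h : G.lt a b) (k : G.lt b c) : G.lt a c := by
  letI := G.po
  rw [lt_iff] at *
  exact _root_.lt_trans h k

/-- the direct successor is unique -/
theorem cov_unique_up (G : MRG V H) {a b c : H} (h : G.Cov a b) (k : G.Cov a c) : b = c := by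
  rcases G.tri ((G.z_eq_of_cov h).symm.trans (G.z_eq_of_cov k)) with l | l | l
  · exact (k.2 _ h.1 l).elim
  · exact l
  · exact (h.2 _ k.1 l).elim

/-- the direct predecessor is unique -/
theorem cov_unique_down (G : MRG V H) {a b c : H} (h : G.Cov b a) (k : G.Cov c a) : b = c := by
  rcases G.tri ((G.z_eq_of_cov h).trans (G.z_eq_of_cov k).symm) with l | l | l
  · exact (h.2 _ l k.1).elim
  · exact l
  · exact (k.2 _ l h.1).elim

theorem exists_cov_up (G : MRG V H) [Fintype H] {a b : H} (h : G.lt a b) :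
    ∃ c, G.Cov a c := by
  letI := G.po
  letI : LocallyFiniteOrder H := Fintype.toLocallyFiniteOrder
  rw [lt_iff] at h
  obtain ⟨c, hc, -⟩ := exists_covBy_le_of_lt h
  exact ⟨c, (G.cov_iff _ _).2 hc⟩

theorem exists_cov_down (G : MRG V H) [Fintype H] {a b : H} (h : G.lt a b) :
    ∃ c, G.Cov c b := by
  letI := G.po
  letI : LocallyFiniteOrder H := Fintype.toLocallyFiniteOrder
  rw [lt_iff] at h
  obtain ⟨c, -, hc⟩ := exists_le_covBy_of_lt h
  exact ⟨c, (G.cov_iff _ _).2 hc⟩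

theorem edge_inv (G : MRG V H) (h : H) : G.edge (G.invh h) = G.edge h :=
  (Quot.sound (r := fun a b : H => b = G.invh a) (a := h) rfl).symm

theorem edge_eq_iff (G : MRG V H) (a b : H) :
    G.edge a = G.edge b ↔ b = a ∨ b = G.invh a := by
  constructor
  · intro h
    have := Quot.eqvGen_exact h
    induction this with
    | rel x y hxy => exact Or.inr hxy
    | refl x => exact Or.inl rfl
    | symm x y _ ih =>
      rcases ih (Quot.eqvGen_sound ‹_›) with h | h
      · exact Or.inl h.symm
      · right; rw [h, G.inv_inv]
    | trans x y z h1 h2 ih1 ih2 =>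
      rcases ih1 (Quot.eqvGen_sound h1) with h | h <;>
      rcases ih2 (Quot.eqvGen_sound h2) with k | k <;> subst h <;> subst k
      · exact Or.inl rfl
      · exact Or.inr rfl
      · exact Or.inr rfl
      · left; rw [G.inv_inv]
  · rintro (h | h)
    · rw [h]
    · rw [h, edge_inv]

theorem edge_surj (G : MRG V H) (v : G.E) : ∃ h, G.edge h = v := Quot.exists_rep v

theorem rel_iff (G : MRG V H) (a b : G.NArrow) : G.nabla.rel a b ↔ b.1.1 = G.invh a.1.2 :=
  Iff.rfl

theorem nonrel_eq (G : MRG V H) {a b : G.NArrow} (h : G.nabla.src a = G.nabla.tgt b)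
    (k : ¬ G.nabla.rel a b) : a.1.2 = b.1.1 := by
  rcases (G.edge_eq_iff _ _).1 h with h | h
  · exact h.symm
  · exact (k h).elim

theorem eq_comp (G : MRG V H) {a b : G.NArrow} (h : a.1.2 = b.1.1) :
    G.nabla.src a = G.nabla.tgt b := by
  change G.edge _ = G.edge _
  rw [h]

theorem eq_nonrel (G : MRG V H) {a b : G.NArrow} (h : a.1.2 = b.1.1) :
    ¬ G.nabla.rel a b := by
  intro k
  rw [rel_iff, ← h] at k
  exact G.inv_ne _ k.symm

theorem arrow_ext_fst (G : MRG V H) {a b : G.NArrow} (h : a.1.1 = b.1.1) : a = b := by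
  obtain ⟨⟨a1, a2⟩, ha⟩ := a
  obtain ⟨⟨b1, b2⟩, hb⟩ := b
  dsimp at *
  subst h
  cases G.cov_unique_down ha hb
  rfl

theorem arrow_ext_snd (G : MRG V H) {a b : G.NArrow} (h : a.1.2 = b.1.2) : a = b := by
  obtain ⟨⟨a1, a2⟩, ha⟩ := a
  obtain ⟨⟨b1, b2⟩, hb⟩ := b
  dsimp at *
  subst h
  cases G.cov_unique_up ha hb
  rfl

theorem chain_pairwise (G : MRG V H) {l : List G.NArrow}
    (h : List.IsChain (fun a b : G.NArrow => a.1.2 = b.1.1) l) :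
    l.Pairwise (fun a b => G.lt b.1.1 a.1.1) := by
  have : IsTrans G.NArrow (fun a b => G.lt b.1.1 a.1.1) :=
    ⟨fun a b c h k => G.lt_trans' k h⟩
  apply List.IsChain.pairwise
  refine h.imp ?_
  intro a b h
  rw [← h]
  exact a.2.1

theorem chain_nodup (G : MRG V H) {l : List G.NArrow}
    (h : List.IsChain (fun a b : G.NArrow => a.1.2 = b.1.1) l) :
    l.Nodup := by
  refine (G.chain_pairwise h).imp ?_
  rintro a b h rfl
  exact G.lt_irrefl' h

/-- number of arrows leaving the half-edge `h` -/
noncomputable def sOut (G : MRG V H) (h : H) : ℕ := Nat.card {a : G.NArrow // a.1.2 = h}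

/-- number of arrows entering the half-edge `h` -/
noncomputable def sIn (G : MRG V H) (h : H) : ℕ := Nat.card {a : G.NArrow // a.1.1 = h}

theorem finite_arrow (G : MRG V H) [Fintype H] : Finite G.NArrow := by
  unfold NArrow
  infer_instance

theorem sOut_le (G : MRG V H) (h : H) : G.sOut h ≤ 1 := by
  have : Subsingleton {a : G.NArrow // a.1.2 = h} :=
    ⟨fun a b => Subtype.ext (G.arrow_ext_snd (a.2.trans b.2.symm))⟩
  exact Finite.card_le_one_iff_subsingleton.2 this

theorem sIn_le (G : MRG V H) (h : H) : G.sIn h ≤ 1 := by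
  have : Subsingleton {a : G.NArrow // a.1.1 = h} :=
    ⟨fun a b => Subtype.ext (G.arrow_ext_fst (a.2.trans b.2.symm))⟩
  exact Finite.card_le_one_iff_subsingleton.2 this

theorem sOut_pos (G : MRG V H) [Fintype H] (h : H) :
    0 < G.sOut h ↔ ∃ a : G.NArrow, a.1.2 = h := by
  have := G.finite_arrow
  unfold sOut
  rw [Finite.card_pos_iff]
  exact nonempty_subtype

theorem sIn_pos (G : MRG V H) [Fintype H] (h : H) :
    0 < G.sIn h ↔ ∃ a : G.NArrow, a.1.1 = h := by
  have := G.finite_arrow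
  unfold sIn
  rw [Finite.card_pos_iff]
  exact nonempty_subtype

theorem card_split (G : MRG V H) [Fintype H] (f : G.NArrow → H) (h : H) :
    Nat.card {a : G.NArrow // G.edge (f a) = G.edge h} =
      Nat.card {a : G.NArrow // f a = h} + Nat.card {a : G.NArrow // f a = G.invh h} := by
  have := G.finite_arrow
  have e : {a : G.NArrow | G.edge (f a) = G.edge h} =
      {a : G.NArrow | f a = h} ∪ {a : G.NArrow | f a = G.invh h} := by
    ext a
    simp only [Set.mem_setOf_eq, Set.mem_union]
    rw [eq_comm, edge_eq_iff]
  have d : Disjoint {a : G.NArrow | f a = h} {a : G.NArrow | f a = G.invh h} := by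
    rw [Set.disjoint_left]
    intro a h1 h2
    exact G.inv_ne h (h2.symm.trans h1)
  have := Set.ncard_union_eq d (Set.toFinite _) (Set.toFinite _)
  rw [← e] at this
  exact this

theorem card_src (G : MRG V H) [Fintype H] (h : H) :
    Nat.card {a : G.NArrow // G.nabla.src a = G.edge h} = G.sOut h + G.sOut (G.invh h) :=
  G.card_split (fun a => a.1.2) h

theorem card_tgt (G : MRG V H) [Fintype H] (h : H) :
    Nat.card {a : G.NArrow // G.nabla.tgt a = G.edge h} = G.sIn h + G.sIn (G.invh h) :=
  G.card_split (fun a => a.1.1) h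

theorem deg_eq (G : MRG V H) [Fintype H] (h : H) :
    G.nabla.deg (G.edge h) =
      (G.sOut h + G.sOut (G.invh h)) + (G.sIn h + G.sIn (G.invh h)) := by
  unfold BQuiv.deg
  rw [card_src, card_tgt]

/-- adjacency relation of the quiver -/
def Adj (G : MRG V H) (x y : G.E) : Prop :=
  ∃ a, (G.nabla.src a = x ∧ G.nabla.tgt a = y) ∨ (G.nabla.src a = y ∧ G.nabla.tgt a = x)

theorem conn_of_le (G : MRG V H) [Fintype H] {a b : H} (h : G.le a b) :
    Relation.ReflTransGen G.Adj (G.edge a) (G.edge b) := by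
  letI := G.po
  letI : LocallyFiniteOrder H := Fintype.toLocallyFiniteOrder
  have h' : a ≤ b := h
  rw [le_iff_reflTransGen_covBy] at h'
  clear h
  induction h' with
  | refl => exact Relation.ReflTransGen.refl
  | @tail x y _ hxy ih =>
  refine ih.tail ?_
  exact ⟨⟨(y, x), (G.cov_iff _ _).2 hxy⟩, Or.inl ⟨rfl, rfl⟩⟩

theorem adj_symm (G : MRG V H) : ∀ {x y}, G.Adj x y → G.Adj y x := by
  rintro x y ⟨a, h⟩
  exact ⟨a, h.symm⟩

theorem conn_of_z (G : MRG V H) [Fintype H] {a b : H} (h : G.z a = G.z b) :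
    Relation.ReflTransGen G.Adj (G.edge a) (G.edge b) := by
  rcases (G.comp_iff a b).2 h with h | h
  · exact G.conn_of_le h
  · have h1 := Relation.reflTransGen_swap.2 (G.conn_of_le h)
    refine Relation.ReflTransGen.mono ?_ _ _ h1
    exact fun x y h => G.adj_symm h

theorem conn (G : MRG V H) [Fintype H] (u v : G.E) : Relation.ReflTransGen G.Adj u v := by
  obtain ⟨a, rfl⟩ := G.edge_surj u
  obtain ⟨b, rfl⟩ := G.edge_surj v
  have key : ∀ y, Relation.ReflTransGen (fun x y => ∃ h, G.z h = x ∧ G.z (G.invh h) = y)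
      (G.z a) y → ∀ b, G.z b = y → Relation.ReflTransGen G.Adj (G.edge a) (G.edge b) := by
    intro y hy
    induction hy with
    | refl =>
      intro b hb
      exact G.conn_of_z hb.symm
    | tail _ hs ih =>
      obtain ⟨h, h1, h2⟩ := hs
      intro b hb
      have := ih h h1
      rw [← G.edge_inv h] at this
      exact this.trans (G.conn_of_z (h2.trans hb.symm))
  exact key _ (G.connected _ _) b rfl

theorem has_arrow (G : MRG V H) [Fintype H] : Nonempty G.NArrow := by
  obtain ⟨h, h', hn, hz⟩ := G.thick
  rcases G.tri hz with l | l | l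
  · obtain ⟨c, hc⟩ := G.exists_cov_up l
    exact ⟨⟨(c, h), hc⟩⟩
  · exact (hn l).elim
  · obtain ⟨c, hc⟩ := G.exists_cov_up l
    exact ⟨⟨(c, h'), hc⟩⟩

theorem chain_of_permitted (G : MRG V H) {l : List G.NArrow}
    (h1 : List.IsChain (fun a b => G.nabla.src a = G.nabla.tgt b) l)
    (h2 : List.IsChain (fun a b => ¬ G.nabla.rel a b) l) :
    List.IsChain (fun a b : G.NArrow => a.1.2 = b.1.1) l := by
  induction l with
  | nil => exact List.IsChain.nil
  | cons a l ih =>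
    cases l with
    | nil => exact List.IsChain.singleton _
    | cons b l =>
      rw [List.isChain_cons_cons] at *
      exact ⟨G.nonrel_eq h1.1 h2.1, ih h1.2 h2.2⟩

theorem gentle (G : MRG V H) [Fintype H] : (G.nabla).IsGentle where
  rel_comp := by
    intro a b h
    rw [rel_iff] at h
    change G.edge _ = G.edge _
    rw [h, edge_inv]
  out_le := by
    intro v
    obtain ⟨h, rfl⟩ := G.edge_surj v
    rw [card_src]
    have := G.sOut_le h
    have := G.sOut_le (G.invh h)
    omega
  in_le := by
    intro v
    obtain ⟨h, rfl⟩ := G.edge_surj v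
    rw [card_tgt]
    have := G.sIn_le h
    have := G.sIn_le (G.invh h)
    omega
  unique_nonrel_post := by
    intro b a a' h h' k k'
    exact G.arrow_ext_snd ((G.nonrel_eq h k).trans (G.nonrel_eq h' k').symm)
  unique_nonrel_pre := by
    intro b a a' h h' k k'
    exact G.arrow_ext_fst ((G.nonrel_eq h k).symm.trans (G.nonrel_eq h' k'))
  unique_rel_post := by
    intro b a a' h h'
    rw [rel_iff] at h h'
    apply G.arrow_ext_snd
    rw [← G.inv_inv a.1.2, ← h, h', G.inv_inv]
  unique_rel_pre := by
    intro b a a' h h'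
    rw [rel_iff] at h h'
    exact G.arrow_ext_fst (h.trans h'.symm)
  admissible := by
    refine ⟨Fintype.card H + 2, by omega, ?_⟩
    intro l hl h1 h2
    have h3 := G.chain_of_permitted h1 h2
    have h4 : (l.map (fun a => a.1.1)).Nodup :=
      (G.chain_nodup h3).map fun a b h => G.arrow_ext_fst h
    have := h4.length_le_card
    rw [List.length_map] at this
    omega
  connected := fun u v => G.conn u v
  has_arrow := G.has_arrow

theorem deg_pos (G : MRG V H) [Fintype H] (h : H) : 0 < G.nabla.deg (G.edge h) := by
  have hf := G.finite_arrow
  have key : ∃ a, G.nabla.src a = G.edge h ∨ G.nabla.tgt a = G.edge h := by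
    obtain ⟨a⟩ := G.has_arrow
    rcases (G.conn (G.edge h) (G.nabla.src a)).cases_head with e | ⟨c, ⟨b, hb⟩, -⟩
    · exact ⟨a, Or.inl e.symm⟩
    · rcases hb with hb | hb
      · exact ⟨b, Or.inl hb.1⟩
      · exact ⟨b, Or.inr hb.2⟩
  unfold BQuiv.deg
  obtain ⟨a, ha | ha⟩ := key
  · have : 0 < Nat.card {a : G.NArrow // G.nabla.src a = G.edge h} :=
      Finite.card_pos_iff.2 ⟨⟨a, ha⟩⟩
    omega
  · have : 0 < Nat.card {a : G.NArrow // G.nabla.tgt a = G.edge h} :=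
      Finite.card_pos_iff.2 ⟨⟨a, ha⟩⟩
    omega

/-- a half-edge with no arrow is alone at its vertex -/
theorem isolated (G : MRG V H) [Fintype H] {h : H} (h1 : G.sOut h = 0) (h2 : G.sIn h = 0)
    {k : H} (hk : G.z k = G.z h) : k = h := by
  rcases G.tri hk with l | l | l
  · obtain ⟨c, hc⟩ := G.exists_cov_down l
    have := (G.sIn_pos h).2 ⟨⟨(h, c), hc⟩, rfl⟩
    omega
  · exact l
  · obtain ⟨c, hc⟩ := G.exists_cov_up l
    have := (G.sOut_pos h).2 ⟨⟨(c, h), hc⟩, rfl⟩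
    omega

/-- in a descending chain ending in a minimal half-edge every arrow below the head occurs -/
theorem mem_of_le (G : MRG V H) [Fintype H] : ∀ (l : List G.NArrow) (x : G.NArrow),
    List.IsChain (fun a b : G.NArrow => a.1.2 = b.1.1) (x :: l) →
    (∀ a, (x :: l).getLast? = some a → ∀ k, ¬ G.Cov k a.1.2) →
    ∀ a : G.NArrow, G.le a.1.1 x.1.1 → a ∈ x :: l := by
  intro l
  induction l with
  | nil =>
    intro x _ hl a ha
    by_cases e : a.1.1 = x.1.1
    · rw [G.arrow_ext_fst e]; exact List.mem_cons_self
    · exfalso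
      have hz : G.z a.1.1 = G.z x.1.2 := (G.z_eq_of_le ha).trans (G.z_eq_of_cov x.2).symm
      have hmin := hl x rfl
      rcases G.tri hz with l | l | l
      · obtain ⟨c, hc⟩ := G.exists_cov_down l
        exact hmin _ hc
      · exact hmin _ (l ▸ a.2)
      · exact x.2.2 _ l ⟨ha, e⟩
  | cons y l ih =>
    intro x hc hl a ha
    rw [List.isChain_cons_cons] at hc
    by_cases e : a.1.1 = x.1.1
    · rw [G.arrow_ext_fst e]; exact List.mem_cons_self
    · refine List.mem_cons_of_mem _ (ih y hc.2 (fun b hb => hl b (by simpa using hb)) a ?_)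
      have hz : G.z a.1.1 = G.z x.1.2 := (G.z_eq_of_le ha).trans (G.z_eq_of_cov x.2).symm
      rw [← hc.1]
      rcases G.tri hz with l | l | l
      · exact l.1
      · rw [l]; exact G.le_refl _
      · exact (x.2.2 _ l ⟨ha, e⟩).elim

theorem z_of_mem (G : MRG V H) : ∀ (l : List G.NArrow) (x : G.NArrow),
    List.IsChain (fun a b : G.NArrow => a.1.2 = b.1.1) (x :: l) →
    ∀ a ∈ x :: l, G.z a.1.1 = G.z x.1.1 := by
  intro l
  induction l with
  | nil =>
    intro x _ a ha
    rw [List.mem_singleton.1 ha]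
  | cons y l ih =>
    intro x hc a ha
    rw [List.isChain_cons_cons] at hc
    rcases List.mem_cons.1 ha with rfl | ha
    · rfl
    · rw [ih y hc.2 a ha, ← hc.1, G.z_eq_of_cov x.2]

/-- a nontrivial chain from a maximal to a minimal half-edge is `η` -/
theorem eta_of_chain (G : MRG V H) [Fintype H] (p : BQuiv.Path G.nabla)
    (x : G.NArrow) (l : List G.NArrow) (hp : p.arrows = x :: l)
    (hc : List.IsChain (fun a b : G.NArrow => a.1.2 = b.1.1) p.arrows)
    (hmax : ∀ k, ¬ G.Cov x.1.1 k)
    (hmin : ∀ a, p.arrows.getLast? = some a → ∀ k, ¬ G.Cov k a.1.2) :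
    G.IsEtaOf (G.z x.1.1) p := by
  refine ⟨?_, hc, G.chain_nodup hc, ?_⟩
  · intro a
    rw [hp] at *
    refine ⟨G.z_of_mem l x hc a, fun hz => G.mem_of_le l x hc hmin a ?_⟩
    rcases G.tri hz with l | l | l
    · exact l.1
    · rw [l]; exact G.le_refl _
    · obtain ⟨c, hc⟩ := G.exists_cov_up l
      exact (hmax _ hc).elim
  · intro e
    rw [e] at hp
    cases hp

theorem exists_chain (G : MRG V H) [Fintype H] (h : H) :
    ∃ p : BQuiv.Path G.nabla,
      List.IsChain (fun a b : G.NArrow => a.1.2 = b.1.1) p.arrows ∧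
      (∀ b, p.arrows.head? = some b → b.1.1 = h) ∧
      (∀ a, p.arrows.getLast? = some a → ∀ k, ¬ G.Cov k a.1.2) ∧
      (p.arrows = [] → p.base = G.edge h ∧ ∀ k, ¬ G.Cov k h) := by
  letI := G.po
  induction h using (wellFounded_lt (α := H)).induction with
  | _ h ih =>
    by_cases hk : ∃ k, G.Cov k h
    · obtain ⟨k, hk⟩ := hk
      obtain ⟨p, h1, h2, h3, h4⟩ := ih k ((G.lt_iff _ _).1 hk.1)
      obtain ⟨x, hx1, hx2⟩ : ∃ x : G.NArrow, x.1.1 = h ∧ x.1.2 = k := ⟨⟨(h, k), hk⟩, rfl, rfl⟩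
      have hch : List.IsChain (fun a b : G.NArrow => a.1.2 = b.1.1) (x :: p.arrows) := by
        rw [List.isChain_cons]
        exact ⟨fun y hy => hx2.trans (h2 y hy).symm, h1⟩
      refine ⟨⟨p.base, x :: p.arrows, ?_, ?_⟩, hch, ?_, ?_, ?_⟩
      · exact hch.imp fun a b e => G.eq_comp e
      · intro a ha
        cases hp : p.arrows with
        | nil =>
          rw [hp] at ha
          cases ha
          rw [(h4 hp).1, ← hx2]
          rfl
        | cons y l =>
          rw [hp, List.getLast?_cons_cons, ← hp] at ha
          exact p.base_eq a ha
      · intro b hb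
        cases hb
        exact hx1
      · intro a ha
        dsimp only at ha
        cases hp : p.arrows with
        | nil =>
          rw [hp] at ha
          cases ha
          change ∀ k, ¬ G.Cov k x.1.2
          rw [hx2]
          exact (h4 hp).2
        | cons y l =>
          rw [hp, List.getLast?_cons_cons, ← hp] at ha
          exact h3 a ha
      · intro e
        cases e
    · refine ⟨⟨G.edge h, [], List.IsChain.nil, ?_⟩, List.IsChain.nil, ?_, ?_, ?_⟩
      · intro a ha; cases ha
      · intro a ha; cases ha
      · intro a ha; cases ha
      · intro _
        exact ⟨rfl, fun k hk' => hk ⟨k, hk'⟩⟩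

theorem exists_max (G : MRG V H) [Fintype H] (α : V) :
    ∃ h, G.z h = α ∧ ∀ k, ¬ G.Cov h k := by
  letI := G.po
  obtain ⟨h0, h0z⟩ := G.z_surj α
  obtain ⟨h, hle, hm⟩ := Set.Finite.exists_le_maximal (Set.toFinite (Set.univ : Set H))
    (Set.mem_univ h0)
  refine ⟨h, (G.z_eq_of_le hle).symm.trans h0z, fun k hk => ?_⟩
  exact hk.1.2 (G.le_antisymm hk.1.1 (hm.2 (Set.mem_univ k) hk.1.1))

theorem exists_eta (G : MRG V H) [Fintype H] (α : V) :
    ∃ p : BQuiv.Path G.nabla, G.IsEtaOf α p ∧ BQuiv.IsPermThread G.nabla p := by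
  obtain ⟨h, rfl, hmax⟩ := G.exists_max α
  obtain ⟨p, h1, h2, h3, h4⟩ := G.exists_chain h
  refine ⟨p, ?_⟩
  cases hp : p.arrows with
  | nil =>
    obtain ⟨hb, hmin⟩ := h4 hp
    have o : G.sOut h = 0 := by
      by_contra hne
      obtain ⟨a, ha⟩ := (G.sOut_pos h).1 (Nat.pos_of_ne_zero hne)
      exact hmax _ (ha ▸ a.2)
    have i : G.sIn h = 0 := by
      by_contra hne
      obtain ⟨a, ha⟩ := (G.sIn_pos h).1 (Nat.pos_of_ne_zero hne)
      exact hmin _ (ha ▸ a.2)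
    constructor
    · refine ⟨?_, h1, G.chain_nodup h1, fun _ => ⟨h, rfl, hb⟩⟩
      intro a
      rw [hp]
      refine ⟨fun h => (List.not_mem_nil h).elim, fun hz => ?_⟩
      have e := G.isolated o i hz
      exact (hmin _ (e ▸ a.2)).elim
    · refine Or.inr ⟨hp, ?_⟩
      rw [hb]
      have d := G.deg_eq h
      have dp := G.deg_pos h
      have l1 := G.sOut_le (G.invh h)
      have l2 := G.sIn_le (G.invh h)
      by_cases d1 : G.nabla.deg (G.edge h) = 1
      · exact Or.inl d1
      · right
        refine ⟨by omega, ?_⟩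
        obtain ⟨a, ha⟩ := (G.sOut_pos (G.invh h)).1 (by omega)
        obtain ⟨b, hb⟩ := (G.sIn_pos (G.invh h)).1 (by omega)
        refine ⟨a, b, ?_, ?_, G.eq_nonrel (ha.trans hb.symm)⟩
        · change G.edge _ = _
          rw [ha, edge_inv]
        · change G.edge _ = _
          rw [hb, edge_inv]
  | cons x l =>
    have hx : x.1.1 = h := h2 x (by rw [hp]; rfl)
    constructor
    · rw [← hx]
      exact G.eta_of_chain p x l hp h1 (by rw [hx]; exact hmax) h3
    · refine Or.inl ⟨by rw [hp]; simp, h1.imp fun a b e => G.eq_nonrel e, ?_, ?_⟩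
      · intro a b hb hab
        by_contra hr
        have e := G.nonrel_eq hab hr
        rw [h2 b hb] at e
        exact hmax _ (e ▸ a.2)
      · intro a c ha hac
        by_contra hr
        have e := G.nonrel_eq hac hr
        exact h3 a ha _ (e.symm ▸ c.2)

theorem eta_trivial (G : MRG V H) [Fintype H] (p : BQuiv.Path G.nabla) (hp : p.arrows = [])
    (h : H) (hb : p.base = G.edge h) (o : G.sOut h = 0) (i : G.sIn h = 0) :
    G.IsEtaOf (G.z h) p := by
  refine ⟨?_, ?_, ?_, fun _ => ⟨h, rfl, hb⟩⟩
  · intro a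
    rw [hp]
    refine ⟨fun h => (List.not_mem_nil h).elim, fun hz => ?_⟩
    have e := G.isolated o i hz
    have := (G.sIn_pos h).2 ⟨a, e⟩
    omega
  · rw [hp]; exact List.IsChain.nil
  · rw [hp]; exact List.nodup_nil

theorem thread_eta (G : MRG V H) [Fintype H] (p : BQuiv.Path G.nabla)
    (ht : BQuiv.IsPermThread G.nabla p) : ∃ α : V, G.IsEtaOf α p := by
  rcases ht with ⟨hne, hperm, hhead, hlast⟩ | ⟨hp, hd⟩
  · have hc := G.chain_of_permitted p.chain hperm
    obtain ⟨x, l, hp⟩ := List.exists_cons_of_ne_nil hne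
    refine ⟨_, G.eta_of_chain p x l hp hc ?_ ?_⟩
    · intro k hk
      have e : (⟨(k, x.1.1), hk⟩ : G.NArrow).1.2 = x.1.1 := rfl
      exact G.eq_nonrel e (hhead _ x (by rw [hp]; rfl) (G.eq_comp e))
    · intro a ha k hk
      have e : a.1.2 = (⟨(a.1.2, k), hk⟩ : G.NArrow).1.1 := rfl
      exact G.eq_nonrel e (hlast a _ ha (G.eq_comp e))
  · rcases hd with hd | ⟨hd, a, b, ha, hb, hr⟩
    · obtain ⟨h, hh⟩ := G.edge_surj p.base
      rw [← hh, deg_eq] at hd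
      by_cases c : G.sOut h = 0 ∧ G.sIn h = 0
      · exact ⟨_, G.eta_trivial p hp h hh.symm c.1 c.2⟩
      · refine ⟨_, G.eta_trivial p hp (G.invh h) ?_ ?_ ?_⟩
        · rw [edge_inv, hh]
        · omega
        · omega
    · have e := G.nonrel_eq (ha.trans hb.symm) hr
      have hh : G.edge a.1.2 = p.base := ha
      rw [← hh, deg_eq] at hd
      have p1 := (G.sOut_pos a.1.2).2 ⟨a, rfl⟩
      have p2 := (G.sIn_pos a.1.2).2 ⟨b, e.symm⟩
      refine ⟨_, G.eta_trivial p hp (G.invh a.1.2) ?_ ?_ ?_⟩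
      · rw [edge_inv, hh]
      · omega
      · omega

end MRG

/-- Let `(G, ≤)` be a marked ribbon graph.  Then the bound quiver
`∇(G, ≤)` is a gentle bound quiver.  Moreover, for each vertex `α` of `G` the path
`η^α` of `∇(G, ≤)` is a permitted thread of `∇(G, ≤)`, and every permitted thread of
`∇(G, ≤)` arises in this way. -/
theorem stmt4 {V H : Type} [Fintype V] [Fintype H] (G : MRG V H) :
    (G.nabla).IsGentle ∧
    (∀ α : V, ∃ p : BQuiv.Path G.nabla, G.IsEtaOf α p ∧ IsPermThread G.nabla p) ∧
    (∀ p : BQuiv.Path G.nabla, IsPermThread G.nabla p → ∃ α : V, G.IsEtaOf α p) := by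
  exact ⟨G.gentle, fun α => G.exists_eta α, fun p hp => G.thread_eta p hp⟩
end

section
/- (i) Every marked ribbon graph (G,≤) is isomorphic, as a marked ribbon graph, to △(∇(G,≤)). (ii) Every gentle bound quiver (Q,I) is isomorphic, as a bound quiver, to ∇(△(Q,I)). Here an isomorphism of marked ribbon graphs is a pair of bijections on vertices and half-edges commuting with z and ι and preserving the partial orders, and an isomorphism of bound quivers is a quiver isomorphism carrying one relation set onto the other. -/
set_option autoImplicit false

attribute [local instance] Classical.propDecidable

open BQuiv MRG

/-- `G'` is (a realization of) the marked ribbon graph `△(Q, I)` of the gentle bound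
quiver `(Q, I)`: its vertices are the permitted threads, its half-edges the split
permitted threads, the incidence map sends a split permitted thread to its thread, the
involution exchanges the two split permitted threads with a common center, and the
order compares, within one thread, the lengths of the right-hand factors. -/
def IsDeltaOf {V A V' H' : Type} (Q : BQuiv V A) (G' : MRG V' H') : Prop :=
  ∃ (fV : PThread Q ≃ V') (fH : PSplit Q ≃ H'),
    (∀ x : PSplit Q, G'.z (fH x) = fV x.thread) ∧
    (∀ x y : PSplit Q, x ≠ y → x.center = y.center → G'.invh (fH x) = fH y) ∧
    (∀ x y : PSplit Q, G'.le (fH x) (fH y) ↔ (x.thread = y.thread ∧ y.idx ≤ x.idx))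

/-- Isomorphism of marked ribbon graphs: bijections on vertices and half-edges
commuting with `z` and `ι` and preserving the partial orders. -/
def MRGIso {V H V' H' : Type} (G : MRG V H) (G' : MRG V' H') : Prop :=
  ∃ (eV : V ≃ V') (eH : H ≃ H'),
    (∀ h, G'.z (eH h) = eV (G.z h)) ∧
    (∀ h, G'.invh (eH h) = eH (G.invh h)) ∧
    (∀ a b, G'.le (eH a) (eH b) ↔ G.le a b)

/-- Isomorphism of bound quivers: a quiver isomorphism carrying one relation set onto
the other. -/
def BQIso {V A V' A' : Type} (Q : BQuiv V A) (Q' : BQuiv V' A') : Prop :=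
  ∃ (eV : V ≃ V') (eA : A ≃ A'),
    (∀ a, Q'.src (eA a) = eV (Q.src a)) ∧
    (∀ a, Q'.tgt (eA a) = eV (Q.tgt a)) ∧
    (∀ a b, Q'.rel (eA a) (eA b) ↔ Q.rel a b)

/-! ### Order lemmas in a finite marked ribbon graph -/

section orderLemmas

variable {W H : Type}

theorem MRG.lt_irrefl'_s5 (G : MRG W H) (a : H) : ¬ G.lt a a := fun h => h.2 rfl

theorem MRG.lt_trans'_s5 (G : MRG W H) {a b c : H} (h1 : G.lt a b) (h2 : G.lt b c) :
    G.lt a c := by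
  refine ⟨G.le_trans h1.1 h2.1, ?_⟩
  rintro rfl
  exact h1.2 (G.le_antisymm h1.1 h2.1)

theorem MRG.lt_of_le_lt (G : MRG W H) {a b c : H} (h1 : G.le a b) (h2 : G.lt b c) :
    G.lt a c := by
  by_cases h : a = b
  · exact h ▸ h2
  · exact G.lt_trans'_s5 ⟨h1, h⟩ h2

theorem MRG.lt_of_lt_le (G : MRG W H) {a b c : H} (h1 : G.lt a b) (h2 : G.le b c) :
    G.lt a c := by
  by_cases h : b = c
  · exact h ▸ h1
  · exact G.lt_trans'_s5 h1 ⟨h2, h⟩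

theorem MRG.z_eq_of_le_s5 (G : MRG W H) {a b : H} (h : G.le a b) : G.z a = G.z b :=
  (G.comp_iff a b).1 (Or.inl h)

theorem MRG.wf_lt (G : MRG W H) [Finite H] : WellFounded G.lt := by
  haveI : Std.Irrefl G.lt := ⟨G.lt_irrefl'_s5⟩
  haveI : IsTrans H G.lt := ⟨fun _ _ _ => G.lt_trans'_s5⟩
  exact Finite.wellFounded_of_trans_of_irrefl _

theorem MRG.wf_gt (G : MRG W H) [Finite H] : WellFounded (fun a b => G.lt b a) := by
  haveI : Std.Irrefl (fun a b => G.lt b a) := ⟨G.lt_irrefl'_s5⟩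
  haveI : IsTrans H (fun a b => G.lt b a) := ⟨fun _ _ _ h1 h2 => G.lt_trans'_s5 h2 h1⟩
  exact Finite.wellFounded_of_trans_of_irrefl _

/-- If `a < b` there is a direct predecessor `c` of `b` with `a ≤ c`. -/
theorem MRG.exists_pred (G : MRG W H) [Finite H] {a b : H} (h : G.lt a b) :
    ∃ c, G.le a c ∧ G.Cov c b := by
  obtain ⟨c, hc, hmax⟩ := G.wf_gt.has_min {c | G.le a c ∧ G.lt c b} ⟨a, G.le_refl a, h⟩
  exact ⟨c, hc.1, hc.2, fun d h1 h2 => hmax d ⟨G.le_trans hc.1 h1.1, h2⟩ h1⟩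

/-- If `a < b` there is a direct successor of `a`. -/
theorem MRG.exists_succ (G : MRG W H) [Finite H] {a b : H} (h : G.lt a b) :
    ∃ c, G.le c b ∧ G.Cov a c := by
  obtain ⟨c, hc, hmin⟩ := G.wf_lt.has_min {c | G.le c b ∧ G.lt a c} ⟨b, G.le_refl b, h⟩
  exact ⟨c, hc.1, hc.2, fun d h1 h2 => hmin d ⟨G.le_trans h2.1 hc.1, h1⟩ h2⟩

theorem MRG.cov_pred_unique (G : MRG W H) {a b c : H} (h1 : G.Cov a c) (h2 : G.Cov b c) :
    a = b := by
  by_contra hne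
  have hz : G.z a = G.z b := (G.z_eq_of_le_s5 h1.1.1).trans (G.z_eq_of_le_s5 h2.1.1).symm
  rcases (G.comp_iff a b).2 hz with h | h
  · exact h1.2 b ⟨h, hne⟩ h2.1
  · exact h2.2 a ⟨h, fun e => hne e.symm⟩ h1.1

theorem MRG.cov_succ_unique (G : MRG W H) {a b c : H} (h1 : G.Cov c a) (h2 : G.Cov c b) :
    a = b := by
  by_contra hne
  have hz : G.z a = G.z b := (G.z_eq_of_le_s5 h1.1.1).symm.trans (G.z_eq_of_le_s5 h2.1.1)
  rcases (G.comp_iff a b).2 hz with h | h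
  · exact h2.2 a h1.1 ⟨h, hne⟩
  · exact h1.2 b h2.1 ⟨h, fun e => hne e.symm⟩

theorem MRG.le_of_min (G : MRG W H) [Finite H] {b h : H} (hb : ∀ c, ¬ G.Cov c b)
    (hz : G.z b = G.z h) : G.le b h := by
  rcases (G.comp_iff b h).2 hz with h1 | h1
  · exact h1
  · by_cases e : h = b
    · exact e ▸ G.le_refl _
    · obtain ⟨c, -, hc⟩ := G.exists_pred ⟨h1, e⟩
      exact absurd hc (hb c)

theorem MRG.le_of_max (G : MRG W H) [Finite H] {t h : H} (ht : ∀ c, ¬ G.Cov t c)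
    (hz : G.z t = G.z h) : G.le h t := by
  rcases (G.comp_iff t h).2 hz with h1 | h1
  · by_cases e : t = h
    · exact e ▸ G.le_refl _
    · obtain ⟨c, -, hc⟩ := G.exists_succ ⟨h1, e⟩
      exact absurd hc (ht c)
  · exact h1

theorem MRG.exists_min (G : MRG W H) [Finite H] (w : W) :
    ∃ b, G.z b = w ∧ ∀ c, ¬ G.Cov c b := by
  obtain ⟨h, hh⟩ := G.z_surj w
  obtain ⟨b, hb, hmin⟩ := G.wf_lt.has_min {c | G.z c = w} ⟨h, hh⟩
  exact ⟨b, hb, fun c hc => hmin c ((G.z_eq_of_le_s5 hc.1.1).trans hb) hc.1⟩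

theorem MRG.exists_max_s5 (G : MRG W H) [Finite H] (w : W) :
    ∃ b, G.z b = w ∧ ∀ c, ¬ G.Cov b c := by
  obtain ⟨h, hh⟩ := G.z_surj w
  obtain ⟨b, hb, hmin⟩ := G.wf_gt.has_min {c | G.z c = w} ⟨h, hh⟩
  exact ⟨b, hb, fun c hc => hmin c ((G.z_eq_of_le_s5 hc.1.1).symm.trans hb) hc.1⟩

/-- A half-edge and its opposite cannot both be alone at their vertices. -/
theorem MRG.not_both_isolated (G : MRG W H) (h : H)
    (h1 : ∀ k, G.z k = G.z h → k = h)
    (h2 : ∀ k, G.z k = G.z (G.invh h) → k = G.invh h) : False := by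
  have key : ∀ w, w = G.z h ∨ w = G.z (G.invh h) := by
    intro w
    have := G.connected (G.z h) w
    induction this with
    | refl => exact Or.inl rfl
    | tail _ hs ih =>
      obtain ⟨k, hk1, hk2⟩ := hs
      rcases ih with e | e
      · have := h1 k (hk1.trans e)
        subst this
        exact Or.inr hk2.symm
      · have := h2 k (hk1.trans e)
        subst this
        rw [G.inv_inv] at hk2
        exact Or.inl hk2.symm
  obtain ⟨k, k', hne, hz⟩ := G.thick
  rcases key (G.z k) with e | e
  · exact hne ((h1 k e).trans (h1 k' (hz.symm.trans e)).symm)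
  · exact hne ((h2 k e).trans (h2 k' (hz.symm.trans e)).symm)

end orderLemmas

/-! ### Realizations: concrete identifications of `Q` with `∇ G` -/

/-- Data identifying the bound quiver `Q` with `∇ G`. -/
structure Realz {V A W H : Type} (Q : BQuiv V A) (G : MRG W H) where
  ed : H → V
  lo : A → H
  hi : A → H
  ed_surj : Function.Surjective ed
  ed_iff : ∀ h h', ed h = ed h' ↔ (h = h' ∨ h' = G.invh h)
  cov : ∀ a, G.Cov (lo a) (hi a)
  lo_inj : ∀ a b, lo a = lo b → a = b
  surj : ∀ h h', G.Cov h h' → ∃ a, lo a = h ∧ hi a = h'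
  src_eq : ∀ a, Q.src a = ed (lo a)
  tgt_eq : ∀ a, Q.tgt a = ed (hi a)
  rel_iff : ∀ a b, Q.rel a b ↔ hi b = G.invh (lo a)

namespace Realz

variable {V A W H : Type} {Q : BQuiv V A} {G : MRG W H}

theorem hi_inj (R : Realz Q G) (a b : A) (h : R.hi a = R.hi b) : a = b := by
  apply R.lo_inj
  exact G.cov_pred_unique (R.cov a) (h ▸ R.cov b)

theorem nonrel_iff (R : Realz Q G) (a b : A) :
    (Q.src a = Q.tgt b ∧ ¬ Q.rel a b) ↔ R.lo a = R.hi b := by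
  rw [R.src_eq, R.tgt_eq, R.ed_iff, R.rel_iff]
  constructor
  · rintro ⟨h | h, h'⟩
    · exact h
    · exact absurd h h'
  · intro h
    exact ⟨Or.inl h, fun h' => G.inv_ne (R.lo a) (by rw [← h', h])⟩

/-- A run from the half-edge `t` down to the half-edge `b` along a list of arrows. -/
def Run (R : Realz Q G) : H → List A → H → Prop
  | t, [], b => t = b
  | t, a :: l, b => R.hi a = t ∧ Run R (R.lo a) l b

theorem Run.le {R : Realz Q G} {l : List A} : ∀ {t b : H}, R.Run t l b → G.le b t := by
  induction l with
  | nil => rintro t b h; cases h; exact G.le_refl _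
  | cons a l ih =>
    rintro t b ⟨rfl, h⟩
    exact G.le_trans (ih h) (R.cov a).1.1

theorem Run.append {R : Realz Q G} {l l' : List A} : ∀ {t m b : H},
    R.Run t l m → R.Run m l' b → R.Run t (l ++ l') b := by
  induction l with
  | nil => rintro t m b h h'; cases h; exact h'
  | cons a l ih =>
    rintro t m b ⟨rfl, h⟩ h'
    exact ⟨rfl, ih h h'⟩

theorem Run.unique {R : Realz Q G} {l : List A} : ∀ {l' : List A} {t b : H},
    R.Run t l b → R.Run t l' b → (∀ c, ¬ G.Cov c b) → l = l' := by
  induction l with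
  | nil =>
    rintro (_ | ⟨a, l'⟩) t b h h' hb
    · rfl
    · cases h
      exact absurd (h'.1 ▸ R.cov a) (hb _)
  | cons a l ih =>
    rintro (_ | ⟨a', l'⟩) t b h h' hb
    · cases h'
      exact absurd (h.1 ▸ R.cov a) (hb _)
    · obtain ⟨h1, h2⟩ := h
      obtain ⟨h1', h2'⟩ := h'
      obtain rfl := R.hi_inj a a' (h1.trans h1'.symm)
      rw [ih h2 h2' hb]

theorem exists_run (R : Realz Q G) [Finite H] (b t : H) :
    G.le b t → ∃ l, R.Run t l b := by
  induction t using G.wf_lt.induction with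
  | _ t ih =>
    intro h
    by_cases e : b = t
    · exact ⟨[], e.symm⟩
    · obtain ⟨c, hbc, hc⟩ := G.exists_pred ⟨h, e⟩
      obtain ⟨l, hl⟩ := ih c hc.1 hbc
      obtain ⟨a, rfl, rfl⟩ := R.surj _ _ hc
      exact ⟨a :: l, rfl, hl⟩

/-- The half-edge at position `n` of a run. -/
def at' (R : Realz Q G) (l : List A) (b : H) (n : ℕ) : H :=
  (l.drop n).head?.elim b R.hi

theorem Run.drop {R : Realz Q G} {l : List A} : ∀ {t b : H} (_ : R.Run t l b) (n : ℕ),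
    R.Run (R.at' l b n) (l.drop n) b := by
  induction l with
  | nil => intro t b h n; simp [at', Run]
  | cons a l ih =>
    rintro t b ⟨rfl, h⟩ n
    cases n with
    | zero => exact ⟨rfl, h⟩
    | succ n => exact ih h n

theorem Run.at_zero {R : Realz Q G} {l : List A} {t b : H} (h : R.Run t l b) :
    R.at' l b 0 = t := by
  cases l with
  | nil => exact h.symm
  | cons a l => exact h.1

theorem Run.at_le {R : Realz Q G} {l : List A} : ∀ {t b : H} (_ : R.Run t l b) (n : ℕ),
    G.le (R.at' l b n) t := by
  induction l with
  | nil => intro t b h n; cases h; simpa [at'] using G.le_refl _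
  | cons a l ih =>
    rintro t b ⟨rfl, h⟩ n
    cases n with
    | zero => exact G.le_refl _
    | succ n => exact G.le_trans (ih h n) (R.cov a).1.1

theorem Run.at_lt {R : Realz Q G} {l : List A} : ∀ {t b : H} (_ : R.Run t l b) (n m : ℕ),
    n < m → m ≤ l.length → G.lt (R.at' l b m) (R.at' l b n) := by
  induction l with
  | nil => intro t b h n m h1 h2; simp at h2; omega
  | cons a l ih =>
    rintro t b ⟨rfl, h⟩ n m h1 h2
    cases m with
    | zero => omega
    | succ m =>
      cases n with
      | zero => exact G.lt_of_le_lt (h.at_le m) (R.cov a).1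
      | succ n => exact ih h n m (by omega) (by simpa using h2)

theorem Run.at_length {R : Realz Q G} {l l' : List A} {t m b : H} (h' : R.Run m l' b) :
    R.at' (l ++ l') b l.length = m := by
  have := h'.at_zero
  simpa [at'] using this

/-- Chains with matching half-edges. -/
theorem run_iff_cons (R : Realz Q G) (l : List A) : ∀ (a : A) (b : H),
    R.Run (R.hi a) (a :: l) b ↔
      ((a :: l).IsChain (fun x y => R.lo x = R.hi y) ∧
        ∀ c, (a :: l).getLast? = some c → R.lo c = b) := by
  induction l with
  | nil => intro a b; simp [Run]
  | cons a' l ih =>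
    intro a b
    rw [List.isChain_cons_cons, List.getLast?_cons_cons, and_assoc, ← ih a' b]
    constructor
    · rintro ⟨-, h1, h2⟩
      exact ⟨h1.symm, rfl, h2⟩
    · rintro ⟨h1, -, h2⟩
      exact ⟨rfl, h1.symm, h2⟩

/-- number of arrows starting at a half-edge -/
noncomputable def so (R : Realz Q G) (h : H) : ℕ := Set.ncard {a | R.lo a = h}

/-- number of arrows ending at a half-edge -/
noncomputable def si (R : Realz Q G) (h : H) : ℕ := Set.ncard {a | R.hi a = h}

theorem so_sub (R : Realz Q G) (h : H) : {a | R.lo a = h}.Subsingleton :=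
  fun a ha b hb => R.lo_inj a b (Eq.trans ha (Eq.symm hb))

theorem si_sub (R : Realz Q G) (h : H) : {a | R.hi a = h}.Subsingleton :=
  fun a ha b hb => R.hi_inj a b (Eq.trans ha (Eq.symm hb))

theorem so_le (R : Realz Q G) (h : H) : R.so h ≤ 1 :=
  (Set.ncard_le_one (R.so_sub h).finite).2 fun a ha b hb => R.so_sub h ha hb

theorem si_le (R : Realz Q G) (h : H) : R.si h ≤ 1 :=
  (Set.ncard_le_one (R.si_sub h).finite).2 fun a ha b hb => R.si_sub h ha hb

theorem so_pos (R : Realz Q G) (h : H) : 0 < R.so h ↔ ∃ a, R.lo a = h :=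
  Set.ncard_pos (R.so_sub h).finite

theorem si_pos (R : Realz Q G) (h : H) : 0 < R.si h ↔ ∃ a, R.hi a = h :=
  Set.ncard_pos (R.si_sub h).finite

theorem deg_eq (R : Realz Q G) (h : H) :
    Q.deg (R.ed h) = R.so h + R.so (G.invh h) + (R.si h + R.si (G.invh h)) := by
  unfold BQuiv.deg
  congr 1
  · have e : {a | Q.src a = R.ed h} = {a | R.lo a = h} ∪ {a | R.lo a = G.invh h} := by
      ext a
      simp only [Set.mem_setOf_eq, Set.mem_union, R.src_eq]
      rw [eq_comm, R.ed_iff, eq_comm]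
    unfold so
    rw [← Set.ncard_union_eq _ (R.so_sub h).finite (R.so_sub _).finite, ← e]
    · rfl
    · rw [Set.disjoint_left]
      intro a ha hb
      exact G.inv_ne h (Eq.trans (Eq.symm hb) ha)
  · have e : {a | Q.tgt a = R.ed h} = {a | R.hi a = h} ∪ {a | R.hi a = G.invh h} := by
      ext a
      simp only [Set.mem_setOf_eq, Set.mem_union, R.tgt_eq]
      rw [eq_comm, R.ed_iff, eq_comm]
    unfold si
    rw [← Set.ncard_union_eq _ (R.si_sub h).finite (R.si_sub _).finite, ← e]
    · rfl
    · rw [Set.disjoint_left]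
      intro a ha hb
      exact G.inv_ne h (Eq.trans (Eq.symm hb) ha)

theorem min_iff (R : Realz Q G) (h : H) : (∀ c, ¬ G.Cov c h) ↔ ∀ a, R.hi a ≠ h := by
  constructor
  · rintro h1 a rfl
    exact h1 _ (R.cov a)
  · intro h1 c hc
    obtain ⟨a, -, ha⟩ := R.surj _ _ hc
    exact h1 a ha

theorem max_iff (R : Realz Q G) (h : H) : (∀ c, ¬ G.Cov h c) ↔ ∀ a, R.lo a ≠ h := by
  constructor
  · rintro h1 a rfl
    exact h1 _ (R.cov a)
  · intro h1 c hc
    obtain ⟨a, ha, -⟩ := R.surj _ _ hc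
    exact h1 a ha

theorem isolated [Finite H] {h : H} (h1 : ∀ c, ¬ G.Cov c h) (h2 : ∀ c, ¬ G.Cov h c)
    (k : H) (hk : G.z k = G.z h) : k = h :=
  G.le_antisymm (G.le_of_max h2 hk.symm) (G.le_of_min h1 hk.symm)

theorem si_zero (R : Realz Q G) (h : H) : R.si h = 0 ↔ ∀ c, ¬ G.Cov c h := by
  rw [R.min_iff, ← not_iff_not, ← ne_eq, ← Nat.pos_iff_ne_zero, R.si_pos]
  push Not
  rfl

theorem so_zero (R : Realz Q G) (h : H) : R.so h = 0 ↔ ∀ c, ¬ G.Cov h c := by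
  rw [R.max_iff, ← not_iff_not, ← ne_eq, ← Nat.pos_iff_ne_zero, R.so_pos]
  push Not
  rfl

/-- The trivial permitted threads sit at edges with an isolated half-edge. -/
theorem trivial_iff (R : Realz Q G) [Finite H] (v : V) :
    (Q.deg v = 1 ∨ (Q.deg v = 2 ∧ ∃ α β, Q.src α = v ∧ Q.tgt β = v ∧ ¬ Q.rel α β)) ↔
      ∃ h, R.ed h = v ∧ (∀ c, ¬ G.Cov c h) ∧ (∀ c, ¬ G.Cov h c) := by
  have hed : ∀ h, R.ed (G.invh h) = R.ed h := fun h => by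
    rw [R.ed_iff, G.inv_inv]; exact Or.inr rfl
  constructor
  · rintro (h | ⟨h, α, β, hα, hβ, hr⟩)
    · obtain ⟨h0, rfl⟩ := R.ed_surj v
      rw [R.deg_eq] at h
      by_cases hc : R.so h0 = 0 ∧ R.si h0 = 0
      · exact ⟨h0, rfl, (R.si_zero _).1 hc.2, (R.so_zero _).1 hc.1⟩
      · exact ⟨G.invh h0, hed _, (R.si_zero _).1 (by omega), (R.so_zero _).1 (by omega)⟩
    · have e := (R.nonrel_iff α β).1 ⟨hα.trans hβ.symm, hr⟩
      rw [R.src_eq] at hα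
      subst hα
      rw [R.deg_eq] at h
      have h1 := (R.so_pos (R.lo α)).2 ⟨α, rfl⟩
      have h2 := (R.si_pos (R.lo α)).2 ⟨β, e.symm⟩
      exact ⟨G.invh (R.lo α), hed _, (R.si_zero _).1 (by omega), (R.so_zero _).1 (by omega)⟩
  · rintro ⟨h, rfl, h1, h2⟩
    have hn : ¬ (R.si (G.invh h) = 0 ∧ R.so (G.invh h) = 0) := by
      rintro ⟨h3, h4⟩
      exact G.not_both_isolated h (isolated h1 h2)
        (isolated ((R.si_zero _).1 h3) ((R.so_zero _).1 h4))
    rw [R.deg_eq, (R.si_zero h).2 h1, (R.so_zero h).2 h2]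
    have := R.si_le (G.invh h)
    have := R.so_le (G.invh h)
    by_cases hc : R.si (G.invh h) = 1 ∧ R.so (G.invh h) = 1
    · right
      refine ⟨by omega, ?_⟩
      obtain ⟨α, hα⟩ := (R.so_pos (G.invh h)).1 (by omega)
      obtain ⟨β, hβ⟩ := (R.si_pos (G.invh h)).1 (by omega)
      refine ⟨α, β, by rw [R.src_eq, hα, hed], by rw [R.tgt_eq, hβ, hed], ?_⟩
      exact ((R.nonrel_iff α β).2 (hα.trans hβ.symm)).2
    · left
      omega

/-- Characterization of permitted threads by runs. -/
theorem thread_iff (R : Realz Q G) [Finite H] (p : Path Q) :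
    IsPermThread Q p ↔ ∃ t b, R.ed b = p.base ∧ R.Run t p.arrows b ∧
      (∀ c, ¬ G.Cov c b) ∧ (∀ c, ¬ G.Cov t c) := by
  obtain ⟨v, l, hch, hb⟩ := p
  cases l with
  | nil =>
    have := R.trivial_iff v
    simp only [IsPermThread, ne_eq, not_true_eq_false, false_and, true_and, false_or, this]
    constructor
    · rintro ⟨h, h1, h2, h3⟩
      exact ⟨h, h, h1, rfl, h2, h3⟩
    · rintro ⟨t, b, h1, h4, h2, h3⟩
      cases h4
      exact ⟨t, h1, h2, h3⟩
  | cons a l =>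
    obtain ⟨d, hd⟩ : ∃ d, (a :: l).getLast? = some d :=
      ⟨_, List.getLast?_eq_getLast_of_ne_nil (List.cons_ne_nil _ _)⟩
    have hchain : (a :: l).IsChain (fun x y => R.lo x = R.hi y) ↔
        (a :: l).IsChain (fun x y => ¬ Q.rel x y) := by
      constructor
      · intro h
        exact h.imp fun x y hxy => ((R.nonrel_iff x y).2 hxy).2
      · intro h
        have h2 : (a :: l).IsChain (fun x y => Q.src x = Q.tgt y) := hch
        rw [List.isChain_iff_getElem] at *
        intro i hi
        exact (R.nonrel_iff _ _).1 ⟨h2 i hi, h i hi⟩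
    have hmax : (∀ x, Q.src x = Q.tgt a → Q.rel x a) ↔ ∀ c, ¬ G.Cov (R.hi a) c := by
      rw [R.max_iff]
      refine forall_congr' fun x => ?_
      rw [ne_eq, ← R.nonrel_iff]
      tauto
    have hmin : (∀ x, Q.src d = Q.tgt x → Q.rel d x) ↔ ∀ c, ¬ G.Cov c (R.lo d) := by
      rw [R.min_iff]
      refine forall_congr' fun x => ?_
      rw [ne_comm, ne_eq, ← R.nonrel_iff]
      tauto
    constructor
    · rintro (⟨-, h1, h2, h3⟩ | ⟨h, -⟩)
      · refine ⟨R.hi a, R.lo d, ?_, ?_, ?_, ?_⟩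
        · rw [← R.src_eq]; exact hb d hd
        · refine (R.run_iff_cons l a _).2 ⟨hchain.2 h1, fun c hc => ?_⟩
          rw [hd] at hc
          cases hc; rfl
        · exact hmin.1 fun x => h3 d x hd
        · exact hmax.1 fun x => h2 x a rfl
      · cases h
    · rintro ⟨t, b, h1, h2, h3, h4⟩
      obtain rfl : R.hi a = t := h2.1
      obtain ⟨h5, h6⟩ := (R.run_iff_cons l a _).1 h2
      obtain rfl := h6 d hd
      refine Or.inl ⟨List.cons_ne_nil _ _, hchain.1 h5, ?_, ?_⟩
      · rintro x y hy
        cases hy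
        exact hmax.2 h4 x
      · rintro x y hx
        change (a :: l).getLast? = some x at hx
        rw [hd] at hx
        cases hx
        exact hmin.2 h3 y

/-- The path belonging to a run. -/
theorem exists_path (R : Realz Q G) (l : List A) (t b : H) (h : R.Run t l b) :
    ∃ p : Path Q, p.base = R.ed b ∧ p.arrows = l := by
  cases l with
  | nil => exact ⟨⟨R.ed b, [], List.isChain_nil, by simp⟩, rfl, rfl⟩
  | cons a l =>
    obtain rfl : R.hi a = t := h.1
    obtain ⟨h5, h6⟩ := (R.run_iff_cons l a _).1 h
    refine ⟨⟨R.ed b, a :: l, ?_, ?_⟩, rfl, rfl⟩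
    · exact h5.imp fun x y hxy => ((R.nonrel_iff x y).2 hxy).1
    · intro c hc
      rw [R.src_eq, h6 c hc]

/-- The graph `G` is a realization of `△ Q`, with matching centers. -/
theorem strong_delta (R : Realz Q G) [Finite H] :
    ∃ (fV : PThread Q ≃ W) (fH : PSplit Q ≃ H),
      (∀ x : PSplit Q, G.z (fH x) = fV x.thread) ∧
      (∀ x : PSplit Q, R.ed (fH x) = x.center) ∧
      (∀ x y : PSplit Q, G.le (fH x) (fH y) ↔ (x.thread = y.thread ∧ y.idx ≤ x.idx)) := by
  have hex : ∀ p : PThread Q, ∃ t b, R.ed b = p.1.base ∧ R.Run t p.1.arrows b ∧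
      (∀ c, ¬ G.Cov c b) ∧ (∀ c, ¬ G.Cov t c) := fun p => (R.thread_iff p.1).1 p.2
  choose t b hbase hrun hmin hmax using hex
  have zt : ∀ p, G.z (b p) = G.z (t p) := fun p => G.z_eq_of_le_s5 (hrun p).le
  have zat : ∀ p n, G.z (R.at' p.1.arrows (b p) n) = G.z (b p) := fun p n =>
    (G.z_eq_of_le_s5 ((hrun p).drop n).le).symm
  have inj : ∀ p q : PThread Q, G.z (b p) = G.z (b q) → p = q := by
    intro p q hz
    have e1 : b p = b q :=
      G.le_antisymm (G.le_of_min (hmin p) hz) (G.le_of_min (hmin q) hz.symm)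
    have hz' : G.z (t p) = G.z (t q) := by rw [← zt, ← zt, hz]
    have e2 : t p = t q :=
      G.le_antisymm (G.le_of_max (hmax q) hz'.symm) (G.le_of_max (hmax p) hz')
    have e3 := (hrun p).unique (by rw [e1, e2]; exact hrun q) (hmin p)
    have e4 : p.1.base = q.1.base := by rw [← hbase, ← hbase, e1]
    apply Subtype.ext
    obtain ⟨⟨_, _, _, _⟩, _⟩ := p
    obtain ⟨⟨_, _, _, _⟩, _⟩ := q
    simp only at e3 e4
    subst e3 e4
    rfl
  have ex : ∀ h : H, ∃ (p : PThread Q) (n : ℕ), n ≤ p.1.arrows.length ∧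
      R.at' p.1.arrows (b p) n = h := by
    intro h
    obtain ⟨t0, ht0, ht⟩ := G.exists_max_s5 (G.z h)
    obtain ⟨b0, hb0, hb⟩ := G.exists_min (G.z h)
    obtain ⟨l1, hl1⟩ := R.exists_run h t0 (G.le_of_max ht ht0)
    obtain ⟨l2, hl2⟩ := R.exists_run b0 h (G.le_of_min hb hb0)
    obtain ⟨p, hp1, hp2⟩ := R.exists_path (l1 ++ l2) t0 b0 (hl1.append hl2)
    have hp : IsPermThread Q p :=
      (R.thread_iff p).2 ⟨t0, b0, hp1.symm, hp2 ▸ hl1.append hl2, hb, ht⟩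
    have hlen : l1.length ≤ p.arrows.length := by simp [hp2]
    refine ⟨⟨p, hp⟩, l1.length, hlen, ?_⟩
    have e : b ⟨p, hp⟩ = b0 := by
      -- both are the minimal end of a run along the same arrows
      cases hl : p.arrows with
      | nil =>
        have hr := hrun ⟨p, hp⟩
        have hr0 := hl1.append hl2
        rw [← hp2] at hr0
        simp only [hl] at hr hr0
        have i1 : t ⟨p, hp⟩ = b ⟨p, hp⟩ := hr
        have i2 : t0 = b0 := hr0
        have hx := hmax ⟨p, hp⟩
        have hy := hmin ⟨p, hp⟩
        have he : R.ed b0 = R.ed (b ⟨p, hp⟩) := hp1.symm.trans (hbase ⟨p, hp⟩).symm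
        rcases (R.ed_iff _ _).1 he with h1 | h1
        · exact h1.symm
        · exfalso
          rw [i1] at hx
          rw [i2] at ht
          rw [h1] at hx hy
          exact G.not_both_isolated b0 (isolated hb ht) (isolated hy hx)
      | cons a l =>
        have hr := hrun ⟨p, hp⟩
        have hr0 := hl1.append hl2
        rw [← hp2] at hr0
        simp only [hl] at hr hr0
        have i1 := hr.1
        have i2 := hr0.1
        rw [← i1] at hr
        rw [← i2] at hr0
        obtain ⟨d, hd⟩ : ∃ d, (a :: l).getLast? = some d :=
          ⟨_, List.getLast?_eq_getLast_of_ne_nil (List.cons_ne_nil _ _)⟩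
        rw [← ((R.run_iff_cons l a _).1 hr).2 d hd, ((R.run_iff_cons l a _).1 hr0).2 d hd]
    rw [e]
    simp only [hp2]
    exact Run.at_length (t := t0) hl2
  let fV : PThread Q → W := fun p => G.z (b p)
  have hfV : Function.Bijective fV := by
    refine ⟨inj, fun w => ?_⟩
    obtain ⟨h, rfl⟩ := G.z_surj w
    obtain ⟨p, n, -, hh⟩ := ex h
    exact ⟨p, by rw [← hh, zat]⟩
  let fH : PSplit Q → H := fun x => R.at' x.1.1.1.arrows (b x.1.1) x.1.2
  have hle : ∀ x y : PSplit Q, G.le (fH x) (fH y) ↔ (x.thread = y.thread ∧ y.idx ≤ x.idx) := by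
    rintro ⟨⟨p, n⟩, hn⟩ ⟨⟨q, m⟩, hm⟩
    constructor
    · intro h
      have hz := G.z_eq_of_le_s5 h
      simp only [fH, zat] at hz
      obtain rfl := inj _ _ hz
      refine ⟨rfl, ?_⟩
      by_contra hlt
      have hlt' : n < m := not_le.1 hlt
      exact G.lt_irrefl'_s5 _ (G.lt_of_lt_le ((hrun p).at_lt n m hlt' hm) h)
    · rintro ⟨h1, h2⟩
      have h1' : p = q := h1
      subst h1'
      have h2' : m ≤ n := h2
      rcases h2'.eq_or_lt with e | e
      · subst e; exact G.le_refl _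
      · exact ((hrun p).at_lt m n e hn).1
  have hfH : Function.Bijective fH := by
    constructor
    · intro x y hxy
      have h1 := (hle x y).1 (hxy ▸ G.le_refl _)
      have h2 := (hle y x).1 (hxy ▸ G.le_refl _)
      exact Subtype.ext (Prod.ext h1.1 (le_antisymm h2.2 h1.2))
    · intro h
      obtain ⟨p, n, hn, hh⟩ := ex h
      exact ⟨⟨(p, n), hn⟩, hh⟩
  refine ⟨Equiv.ofBijective fV hfV, Equiv.ofBijective fH hfH, ?_, ?_, hle⟩
  · intro x
    exact zat _ _
  · intro x
    simp only [Equiv.ofBijective_apply, fH, PSplit.center, at', Path.vertexAt]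
    cases (x.1.1.1.arrows.drop x.1.2).head? with
    | none => exact hbase _
    | some a => exact (R.tgt_eq a).symm

theorem delta (R : Realz Q G) [Finite H] : IsDeltaOf Q G := by
  obtain ⟨fV, fH, h1, h2, h3⟩ := R.strong_delta
  refine ⟨fV, fH, h1, ?_, h3⟩
  intro x y hne hc
  rw [← h2, ← h2, R.ed_iff] at hc
  rcases hc with h | h
  · exact absurd (fH.injective h) hne
  · exact h.symm

theorem mrgIso (R : Realz Q G) [Finite H] {W' H' : Type} (G' : MRG W' H')
    (hG : IsDeltaOf Q G') : MRGIso G G' := by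
  obtain ⟨fV, fH, h1, h2, h3⟩ := R.strong_delta
  obtain ⟨gV, gH, k1, k2, k3⟩ := hG
  refine ⟨fV.symm.trans gV, fH.symm.trans gH, ?_, ?_, ?_⟩
  · intro h
    obtain ⟨x, rfl⟩ := fH.surjective h
    simp [k1, h1]
  · intro h
    obtain ⟨x, rfl⟩ := fH.surjective h
    obtain ⟨y, hy⟩ := fH.surjective (G.invh (fH x))
    rw [← hy]
    simp only [Equiv.trans_apply, Equiv.symm_apply_apply]
    apply k2
    · rintro rfl
      exact G.inv_ne _ hy.symm
    · rw [← h2, ← h2, R.ed_iff]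
      exact Or.inr hy
  · intro x y
    obtain ⟨x, rfl⟩ := fH.surjective x
    obtain ⟨y, rfl⟩ := fH.surjective y
    simp [k3, h3]

/-- Transport of the graph structure to the canonical vertex and half-edge types. -/
theorem exists_delta (R : Realz Q G) [Finite H] :
    ∃ G' : MRG (PThread Q) (PSplit Q), IsDeltaOf Q G' := by
  obtain ⟨fV, fH, h1, h2, h3⟩ := R.delta
  refine ⟨{
    z := fun x => x.thread
    invh := fun x => fH.symm (G.invh (fH x))
    inv_inv := fun x => by simp [G.inv_inv]
    inv_ne := fun x hx => G.inv_ne (fH x) (by rw [Equiv.symm_apply_eq] at hx; exact hx)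
    z_surj := fun p => by
      obtain ⟨h, hh⟩ := G.z_surj (fV p)
      refine ⟨fH.symm h, fV.injective ?_⟩
      rw [← h1]
      simpa using hh
    le := fun x y => G.le (fH x) (fH y)
    le_refl := fun x => G.le_refl _
    le_trans := fun h h' => G.le_trans h h'
    le_antisymm := fun h h' => fH.injective (G.le_antisymm h h')
    comp_iff := fun x y => by rw [G.comp_iff, h1, h1, fV.injective.eq_iff]
    connected := fun u v => by
      have := G.connected (fV u) (fV v)
      have := Relation.ReflTransGen.lift (p := fun x y => ∃ h : PSplit Q, h.thread = x ∧
        (fH.symm (G.invh (fH h))).thread = y) fV.symm (r := fun x y => ∃ h, G.z h = x ∧ G.z (G.invh h) = y) (fun a c hac => by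
          obtain ⟨h, e1, e2⟩ := hac
          refine ⟨fH.symm h, ?_, ?_⟩
          · rw [Equiv.eq_symm_apply, ← h1]; simpa using e1
          · rw [Equiv.eq_symm_apply, ← h1]; simpa using e2) _ _ this
      simpa [Function.onFun] using this
    thick := by
      obtain ⟨h, h', hne, hz⟩ := G.thick
      refine ⟨fH.symm h, fH.symm h', fun e => hne (fH.symm.injective e), fV.injective ?_⟩
      rw [← h1, ← h1]
      simpa using hz }, Equiv.refl _, Equiv.refl _, fun x => rfl, ?_, h3⟩
  intro x y hne hc
  have := h2 x y hne hc
  change fH.symm (G.invh (fH x)) = y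
  rw [this]
  simp

theorem bqIso (R : Realz Q G) : BQIso Q G.nabla := by
  let f : G.E → V := Quot.lift R.ed (fun a b h => (R.ed_iff a b).2 (Or.inr h))
  have hf : Function.Bijective f := by
    constructor
    · rintro ⟨x⟩ ⟨y⟩ h
      rcases (R.ed_iff x y).1 h with h | h
      · rw [h]
      · exact Quot.sound h
    · intro v
      obtain ⟨h, rfl⟩ := R.ed_surj v
      exact ⟨G.edge h, rfl⟩
  let g : A → G.NArrow := fun a => ⟨(R.hi a, R.lo a), R.cov a⟩
  have hg : Function.Bijective g := by
    constructor
    · intro a b h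
      exact R.lo_inj a b (congrArg (fun x => x.1.2) h)
    · rintro ⟨⟨h', h⟩, hc⟩
      obtain ⟨a, rfl, rfl⟩ := R.surj _ _ hc
      exact ⟨a, rfl⟩
  refine ⟨(Equiv.ofBijective f hf).symm, Equiv.ofBijective g hg, ?_, ?_, ?_⟩
  · intro a
    rw [Equiv.eq_symm_apply, R.src_eq]
    rfl
  · intro a
    rw [Equiv.eq_symm_apply, R.tgt_eq]
    rfl
  · intro a b
    exact (R.rel_iff a b).symm

/-- The tautological realization of `∇ G` by `G`. -/
def ofNabla (G : MRG W H) : Realz G.nabla G where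
  ed := G.edge
  lo a := a.1.2
  hi a := a.1.1
  ed_surj := fun v => Quot.exists_rep v
  ed_iff := fun h h' => by
    constructor
    · intro e
      have := Quot.eqvGen_exact e
      induction this with
      | rel x y h => exact Or.inr h
      | refl x => exact Or.inl rfl
      | symm x y _ ih =>
        rcases ih (Quot.eqvGen_sound ‹_›) with h | h
        · exact Or.inl h.symm
        · right; rw [h, G.inv_inv]
      | trans x y z _ _ ih1 ih2 =>
        rcases ih1 (Quot.eqvGen_sound ‹_›) with h | h <;>
        rcases ih2 (Quot.eqvGen_sound ‹_›) with h' | h'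
        · exact Or.inl (h.trans h')
        · right; rw [h', h]
        · right; rw [← h', h]
        · left; rw [h', h, G.inv_inv]
    · rintro (rfl | h)
      · rfl
      · exact Quot.sound h
  cov a := a.2
  lo_inj := by
    rintro ⟨⟨a, b⟩, h⟩ ⟨⟨a', b'⟩, h'⟩ e
    simp only at e
    subst e
    obtain rfl := G.cov_succ_unique h h'
    rfl
  surj h h' hc := ⟨⟨(h', h), hc⟩, rfl, rfl⟩
  src_eq a := rfl
  tgt_eq a := rfl
  rel_iff a b := Iff.rfl

/-- Change of graph along an isomorphism. -/
theorem transport (R : Realz Q G) {W' H' : Type} {G' : MRG W' H'} (h : MRGIso G G') :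
    Nonempty (Realz Q G') := by
  obtain ⟨eV, e, h1, h2, h3⟩ := h
  have hlt : ∀ a b, G'.lt (e a) (e b) ↔ G.lt a b := fun a b => by
    simp [MRG.lt, h3]
  have hcov : ∀ a b, G'.Cov (e a) (e b) ↔ G.Cov a b := fun a b => by
    simp only [MRG.Cov, hlt]
    refine and_congr_right fun _ => ⟨fun h c => ?_, fun h c => ?_⟩
    · have := h (e c)
      rwa [hlt, hlt] at this
    · obtain ⟨c, rfl⟩ := e.surjective c
      rw [hlt, hlt]
      exact h c
  refine ⟨{
    ed := fun h => R.ed (e.symm h)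
    lo := fun a => e (R.lo a)
    hi := fun a => e (R.hi a)
    ed_surj := R.ed_surj.comp e.symm.surjective
    ed_iff := fun x y => by
      obtain ⟨x, rfl⟩ := e.surjective x
      obtain ⟨y, rfl⟩ := e.surjective y
      simp [R.ed_iff, h2]
    cov := fun a => (hcov _ _).2 (R.cov a)
    lo_inj := fun a b h => R.lo_inj a b (e.injective h)
    surj := fun x y h => by
      obtain ⟨x, rfl⟩ := e.surjective x
      obtain ⟨y, rfl⟩ := e.surjective y
      obtain ⟨a, rfl, rfl⟩ := R.surj _ _ ((hcov _ _).1 h)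
      exact ⟨a, rfl, rfl⟩
    src_eq := fun a => by simp [R.src_eq]
    tgt_eq := fun a => by simp [R.tgt_eq]
    rel_iff := fun a b => by simp [R.rel_iff, h2] }⟩

end Realz

/-! ### Every gentle bound quiver has a realization -/

section gentle

variable {V A : Type}

theorem inj_to_bool {X : Type} [Finite X] (h : Nat.card X ≤ 2) :
    ∃ f : X → Bool, Function.Injective f := by
  haveI := Fintype.ofFinite X
  have : Fintype.card X ≤ Fintype.card Bool := by
    rw [← Nat.card_eq_fintype_card]; simpa using h
  obtain ⟨f⟩ := Function.Embedding.nonempty_of_card_le this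
  exact ⟨f, f.injective⟩

/-- Local choice of sides at a vertex. -/
theorem exists_sides_local [Finite A] (Q : BQuiv V A) (hQ : Q.IsGentle) (v : V) :
    ∃ (σ τ : A → Bool),
      (∀ a a', Q.src a = v → Q.src a' = v → σ a = σ a' → a = a') ∧
      (∀ b b', Q.tgt b = v → Q.tgt b' = v → τ b = τ b' → b = b') ∧
      (∀ a b, Q.src a = v → Q.tgt b = v → (Q.rel a b ↔ σ a ≠ τ b)) := by
  by_cases hI : ∃ b, Q.tgt b = v
  · obtain ⟨b0, rfl⟩ := hI
    refine ⟨fun a => decide (¬ Q.rel a b0), fun b => decide (b = b0), ?_, ?_, ?_⟩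
    · intro a a' ha ha' h
      simp only [decide_eq_decide] at h
      by_cases hr : Q.rel a b0
      · exact hQ.unique_rel_post b0 a a' hr (by tauto)
      · exact hQ.unique_nonrel_post b0 a a' ha ha' hr (by tauto)
    · intro b b' hb hb' h
      simp only [decide_eq_decide] at h
      by_cases e : b = b0
      · rw [e, h.1 e]
      · have e' : b' ≠ b0 := fun x => e (h.2 x)
        obtain ⟨f, hf⟩ := inj_to_bool (hQ.in_le (Q.tgt b0))
        have n1 : f ⟨b, hb⟩ ≠ f ⟨b0, rfl⟩ := fun x => e (congrArg Subtype.val (hf x))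
        have n2 : f ⟨b', hb'⟩ ≠ f ⟨b0, rfl⟩ := fun x => e' (congrArg Subtype.val (hf x))
        have n3 : f ⟨b, hb⟩ = f ⟨b', hb'⟩ := by
          revert n1 n2
          generalize f ⟨b, hb⟩ = x
          generalize f ⟨b', hb'⟩ = y
          generalize f ⟨b0, rfl⟩ = z
          revert x y z
          decide
        exact congrArg Subtype.val (hf n3)
    · intro a b ha hb
      by_cases e : b = b0
      · subst e; simp
      · have h1 : Q.rel a b ↔ ¬ Q.rel a b0 := by
          constructor
          · intro h h'
            exact e (hQ.unique_rel_pre a b b0 h h')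
          · intro h
            by_contra h'
            exact e (hQ.unique_nonrel_pre a b b0 (ha.trans hb.symm) ha h' h)
        simp [e, h1]
  · push Not at hI
    obtain ⟨f, hf⟩ := inj_to_bool (hQ.out_le v)
    refine ⟨fun a => if h : Q.src a = v then f ⟨a, h⟩ else true, fun _ => true, ?_, ?_, ?_⟩
    · intro a a' ha ha' h
      simp only [ha, ha', dif_pos] at h
      exact congrArg Subtype.val (hf h)
    · intro b b' hb
      exact absurd hb (hI b)
    · intro a b _ hb
      exact absurd hb (hI b)

theorem exists_sides [Finite A] (Q : BQuiv V A) (hQ : Q.IsGentle) :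
    ∃ (lo hi : A → V × Bool),
      (∀ a, (lo a).1 = Q.src a) ∧ (∀ a, (hi a).1 = Q.tgt a) ∧
      (∀ a a', lo a = lo a' → a = a') ∧
      (∀ b b', hi b = hi b' → b = b') ∧
      (∀ a b, Q.rel a b ↔ hi b = ((lo a).1, !(lo a).2)) := by
  choose σ τ h1 h2 h3 using exists_sides_local Q hQ
  refine ⟨fun a => (Q.src a, σ (Q.src a) a), fun a => (Q.tgt a, τ (Q.tgt a) a),
    fun _ => rfl, fun _ => rfl, ?_, ?_, ?_⟩
  · intro a a' h
    obtain ⟨e1, e2⟩ := Prod.ext_iff.1 h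
    simp only at e1 e2
    rw [← e1] at e2
    exact h1 _ a a' rfl e1.symm e2
  · intro a a' h
    obtain ⟨e1, e2⟩ := Prod.ext_iff.1 h
    simp only at e1 e2
    rw [← e1] at e2
    exact h2 _ a a' rfl e1.symm e2
  · intro a b
    simp only [Prod.mk.injEq]
    constructor
    · intro h
      have e := hQ.rel_comp a b h
      refine ⟨e.symm, ?_⟩
      have := (h3 _ a b rfl e.symm).1 h
      rw [← e]
      revert this
      generalize σ (Q.src a) a = x
      generalize τ (Q.src a) b = y
      revert x y
      decide
    · rintro ⟨e, h⟩
      rw [h3 _ a b rfl e, ← e, h, e]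
      generalize σ (Q.src a) a = x
      revert x
      decide

theorem exists_realz [Finite V] [Finite A] (Q : BQuiv V A) (hQ : Q.IsGentle) :
    ∃ (W : Type) (G : MRG W (V × Bool)), Nonempty (Realz Q G) := by
  obtain ⟨lo, hi, hlo, hhi, lo_inj, hi_inj, hrel⟩ := exists_sides Q hQ
  let step : V × Bool → V × Bool → Prop := fun x y => ∃ a, lo a = x ∧ hi a = y
  have det : ∀ x y y', step x y → step x y' → y = y' := by
    rintro x y y' ⟨a, rfl, rfl⟩ ⟨a', h, rfl⟩
    rw [lo_inj _ _ h]
  have codet : ∀ x x' y, step x y → step x' y → x = x' := by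
    rintro x x' y ⟨a, rfl, rfl⟩ ⟨a', rfl, h⟩
    rw [hi_inj _ _ h]
  have nonrel : ∀ a b, lo a = hi b → Q.src a = Q.tgt b ∧ ¬ Q.rel a b := by
    intro a b h
    refine ⟨by rw [← hlo, ← hhi, h], fun hr => ?_⟩
    rw [hrel, ← h] at hr
    have := congrArg Prod.snd hr
    simp at this
  -- acyclicity
  have acyc : ∀ x, ¬ Relation.TransGen step x x := by
    intro x hx
    have hlist : ∀ n x, Relation.TransGen step x x →
        ∃ l : List A, l.length = n ∧ l.IsChain (fun a b => lo a = hi b) ∧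
          ∀ a ∈ l.head?, hi a = x := by
      intro n
      induction n with
      | zero => intro x _; exact ⟨[], rfl, List.isChain_nil, by simp⟩
      | succ n ih =>
        intro x hx
        obtain ⟨y, hxy, hyx⟩ := Relation.TransGen.tail'_iff.1 hx
        obtain ⟨a, rfl, rfl⟩ := hyx
        obtain ⟨l, h1, h2, h3⟩ := ih (lo a) (Relation.TransGen.head' ⟨a, rfl, rfl⟩ hxy)
        refine ⟨a :: l, by simp [h1], ?_, by simp⟩
        rw [List.isChain_cons]
        exact ⟨fun b hb => (h3 b hb).symm, h2⟩
    obtain ⟨m, -, hm⟩ := hQ.admissible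
    obtain ⟨l, h1, h2, -⟩ := hlist m x hx
    exact hm l h1 (h2.imp fun a b h => (nonrel a b h).1) (h2.imp fun a b h => (nonrel a b h).2)
  let le : V × Bool → V × Bool → Prop := Relation.ReflTransGen step
  have antis : ∀ a b, le a b → le b a → a = b := by
    intro a b h1 h2
    rcases Relation.reflTransGen_iff_eq_or_transGen.1 h1 with h | h
    · exact h.symm
    · exact absurd (h.trans_left h2) (acyc a)
  have up : ∀ a b c, le a b → le a c → le b c ∨ le c b := fun a b c h1 h2 =>
    Relation.ReflTransGen.total_of_right_unique (fun x y y' h h' => det x y y' h h') h1 h2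
  have swap : ∀ a b, Relation.ReflTransGen (Function.swap step) b a ↔ le a b := fun a b =>
    Relation.reflTransGen_swap
  have down : ∀ a b c, le b a → le c a → le b c ∨ le c b := fun a b c h1 h2 => by
    have := Relation.ReflTransGen.total_of_right_unique (r := Function.swap step)
      (fun x y y' h h' => codet y y' x h h') ((swap _ _).2 h1) ((swap _ _).2 h2)
    rw [swap, swap] at this
    exact this.symm
  let S : Setoid (V × Bool) := {
    r := fun a b => le a b ∨ le b a
    iseqv := {
      refl := fun a => Or.inl Relation.ReflTransGen.refl
      symm := fun h => h.symm
      trans := by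
        rintro a b c (h | h) (h' | h')
        · exact Or.inl (h.trans h')
        · exact down _ _ _ h h'
        · exact up _ _ _ h h'
        · exact Or.inr (h'.trans h) } }
  have stepz : ∀ a, (Quotient.mk S (lo a)) = Quotient.mk S (hi a) := fun a =>
    Quotient.sound (Or.inl (Relation.ReflTransGen.single ⟨a, rfl, rfl⟩))
  have step_ne : ∀ a, lo a ≠ hi a := fun a h =>
    acyc (lo a) (Relation.TransGen.single ⟨a, rfl, h.symm⟩)
  let G : MRG (Quotient S) (V × Bool) := {
    z := Quotient.mk S
    invh := fun h => (h.1, !h.2)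
    inv_inv := fun h => by simp
    inv_ne := fun h e => by
      have := congrArg Prod.snd e
      simp at this
    z_surj := fun q => Quotient.exists_rep q
    le := le
    le_refl := fun h => Relation.ReflTransGen.refl
    le_trans := fun h h' => h.trans h'
    le_antisymm := fun h h' => antis _ _ h h'
    comp_iff := fun a b => (Quotient.eq (r := S)).symm
    connected := by
      have flip : ∀ (v : V) (i j : Bool), Relation.ReflTransGen
          (fun x y => ∃ h : V × Bool, Quotient.mk S h = x ∧ Quotient.mk S (h.1, !h.2) = y)
          (Quotient.mk S (v, i)) (Quotient.mk S (v, j)) := by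
        intro v i j
        by_cases e : j = i
        · rw [e]
        · have : j = !i := by revert e; revert i j; decide
          exact Relation.ReflTransGen.single ⟨(v, i), rfl, by rw [this]⟩
      have main : ∀ (v w : V) (i j : Bool), Relation.ReflTransGen
          (fun x y => ∃ h : V × Bool, Quotient.mk S h = x ∧ Quotient.mk S (h.1, !h.2) = y)
          (Quotient.mk S (v, i)) (Quotient.mk S (w, j)) := by
        intro v w i
        have := hQ.connected v w
        induction this with
        | refl => exact flip v i
        | tail _ hs ih =>
          intro j
          obtain ⟨a, ⟨h1, h2⟩ | ⟨h1, h2⟩⟩ := hs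
          · have e1 : lo a = (_, (lo a).2) := Prod.ext ((hlo a).trans h1) rfl
            have e2 : hi a = (_, (hi a).2) := Prod.ext ((hhi a).trans h2) rfl
            have h3 := ih (lo a).2
            rw [← e1, stepz, e2] at h3
            exact h3.trans (flip _ _ _)
          · have e1 : lo a = (_, (lo a).2) := Prod.ext ((hlo a).trans h1) rfl
            have e2 : hi a = (_, (hi a).2) := Prod.ext ((hhi a).trans h2) rfl
            have h3 := ih (hi a).2
            rw [← e2, ← stepz, e1] at h3
            exact h3.trans (flip _ _ _)
      intro u v
      obtain ⟨⟨u, i⟩, rfl⟩ := Quotient.exists_rep u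
      obtain ⟨⟨v, j⟩, rfl⟩ := Quotient.exists_rep v
      exact main u v i j
    thick := by
      obtain ⟨a⟩ := hQ.has_arrow
      exact ⟨lo a, hi a, step_ne a, stepz a⟩ }
  refine ⟨Quotient S, G, ⟨{
    ed := Prod.fst
    lo := lo
    hi := hi
    ed_surj := fun v => ⟨(v, true), rfl⟩
    ed_iff := ?_
    cov := ?_
    lo_inj := lo_inj
    surj := ?_
    src_eq := fun a => (hlo a).symm
    tgt_eq := fun a => (hhi a).symm
    rel_iff := hrel }⟩⟩
  · rintro ⟨v, i⟩ ⟨w, j⟩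
    change v = w ↔ ((v, i) = (w, j) ∨ (w, j) = (v, !i))
    simp only [Prod.mk.injEq]
    constructor
    · rintro rfl
      cases i <;> cases j <;> simp
    · rintro (h | h)
      · exact h.1
      · exact h.1.symm
  · intro a
    refine ⟨⟨Relation.ReflTransGen.single ⟨a, rfl, rfl⟩, step_ne a⟩, ?_⟩
    rintro c ⟨h1, h1'⟩ ⟨h2, h2'⟩
    rcases Relation.ReflTransGen.cases_head h1 with e | ⟨d, hd, hdc⟩
    · exact h1' e
    · obtain rfl := det _ _ _ hd ⟨a, rfl, rfl⟩
      exact h2' (antis _ _ h2 hdc)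
  · rintro h h' ⟨⟨h1, h1'⟩, h2⟩
    rcases Relation.ReflTransGen.cases_head h1 with e | ⟨d, hd, hdc⟩
    · exact absurd e h1'
    · by_cases e : d = h'
      · exact e ▸ hd
      · exfalso
        refine h2 d ⟨Relation.ReflTransGen.single hd, ?_⟩ ⟨hdc, e⟩
        rintro rfl
        exact acyc _ (Relation.TransGen.single hd)

end gentle

/-- (i) Every marked ribbon graph `(G, ≤)` is isomorphic, as a marked ribbon graph, to
`△(∇(G, ≤))` (in particular `△(∇(G, ≤))` exists);
(ii) every gentle bound quiver `(Q, I)` is isomorphic, as a bound quiver, to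
`∇(△(Q, I))` (in particular `△(Q, I)` exists). -/
theorem stmt5 :
    (∀ (V H : Type) [Fintype V] [Fintype H] (G : MRG V H),
      (∃ G' : MRG (PThread G.nabla) (PSplit G.nabla), IsDeltaOf G.nabla G') ∧
      (∀ (V' H' : Type) (G' : MRG V' H'), IsDeltaOf G.nabla G' → MRGIso G G')) ∧
    (∀ (V A : Type) [Fintype V] [Fintype A] (Q : BQuiv V A), Q.IsGentle →
      (∃ G' : MRG (PThread Q) (PSplit Q), IsDeltaOf Q G') ∧
      (∀ (V' H' : Type) (G' : MRG V' H'), IsDeltaOf Q G' → BQIso Q G'.nabla)) := by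
  constructor
  · intro V H _ _ G
    exact ⟨(Realz.ofNabla G).exists_delta, fun V' H' G' h => (Realz.ofNabla G).mrgIso G' h⟩
  · intro V A _ _ Q hQ
    obtain ⟨W, G, ⟨R⟩⟩ := exists_realz Q hQ
    refine ⟨R.exists_delta, fun V' H' G' h => ?_⟩
    obtain ⟨R'⟩ := R.transport (R.mrgIso G' h)
    exact R'.bqIso
end
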